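/- arXiv:math/0602508 — 5 statements merged into one kernel-verified Lean document; each statement's English description precedes it below -/
import Mathlib

section
/- Let G be a group, let U₀ and W₀ be subgroups of G, and let u, w, a, b ∈ G satisfy: (1) ab = ba; (2) u ∈ ⟨{u^a, u^b} ∪ U₀⟩, u^a ∈ ⟨{u, u^b} ∪ U₀⟩, and u^b ∈ ⟨{u, u^a} ∪ U₀⟩; (3) w ∈ ⟨{w^a, w^b} ∪ W₀⟩, w^a ∈ ⟨{w, w^b} ∪ W₀⟩, and w^b ∈ ⟨{w, w^a} ∪ W₀⟩; (4) u commutes with w and u^a commutes with w; (5) U₀^a = U₀^b = U₀ and W₀^a = W₀^b = W₀ (conjugation by a and by b maps each of U₀ and W₀ onto itself); (6) every element of U₀ commutes with w, and u commutes with every element of W₀. Then every element of the subgroup generated by {u^g : g ∈ ⟨a, b⟩} commutes with every element of the subgroup generated by {w^g : g ∈ ⟨a, b⟩}. -/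
/-!
Write `u ^ γ` for the image of `u` under an automorphism `γ`. Call `γ` good when `u ^ γ` commutes
with `w`. Goodness can be read in two ways, as a property of `u ^ γ` against `w` or of `u` against
`w ^ γ⁻¹`. By the first reading, two good vertices of a triangle `γ, αγ, βγ` force the third to be
good; by the second, the same holds for the reflected triangles `γ, α⁻¹γ, β⁻¹γ`. These two families
of triangles tile the triangular lattice spanned by `α` and `β`, and the good edge from `1` to
`α` makes goodness spread over all of it.
-/

/-- Any two of the three propositions imply the remaining one. This is how membership in a subgroup,
and hence commuting with a fixed element, behaves on a triangle of the lattice. -/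
structure TwoOutOfThree (p q r : Prop) : Prop where
  fst : q → r → p
  snd : p → r → q
  trd : p → q → r

/-- Each of `x`, `y`, `z` lies in the subgroup generated by the other two together with `K`. With
`y` and `z` the images of `x` under two automorphisms, this is the relation that the theorem imposes
on `u` modulo `U₀` and on `w` modulo `W₀`. -/
structure MutuallyGenerated {G : Type*} [Group G] (K : Set G) (x y z : G) : Prop where
  fst_mem : x ∈ Subgroup.closure ({y, z} ∪ K)
  snd_mem : y ∈ Subgroup.closure ({x, z} ∪ K)
  trd_mem : z ∈ Subgroup.closure ({x, y} ∪ K)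

section Group

variable {G : Type*} [Group G]

theorem MutuallyGenerated.twoOutOfThree_mem {K : Set G} {x y z : G}
    (h : MutuallyGenerated K x y z) {C : Subgroup G} (hK : K ⊆ C) :
    TwoOutOfThree (x ∈ C) (y ∈ C) (z ∈ C) := by
  have closure_le {s t : G} (hs : s ∈ C) (ht : t ∈ C) : Subgroup.closure ({s, t} ∪ K) ≤ C :=
    (Subgroup.closure_le C).2 (Set.union_subset (Set.pair_subset hs ht) hK)
  exact ⟨fun hy hz ↦ closure_le hy hz h.fst_mem, fun hx hz ↦ closure_le hx hz h.snd_mem,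
    fun hx hy ↦ closure_le hx hy h.trd_mem⟩

theorem commute_of_mem_closure {s t : Set G} (hst : ∀ x ∈ s, ∀ y ∈ t, Commute x y) {x y : G}
    (hx : x ∈ Subgroup.closure s) (hy : y ∈ Subgroup.closure t) : Commute x y := by
  have hs : s ⊆ Subgroup.centralizer t := fun x hx ↦
    Subgroup.mem_centralizer_iff.2 fun y hy ↦ (hst x hx y hy).symm
  have hx' : x ∈ Subgroup.centralizer (Subgroup.closure t) := by
    rw [Subgroup.centralizer_closure]
    exact (Subgroup.closure_le _).2 hs hx
  exact (Subgroup.mem_centralizer_iff.1 hx' y hy).symm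

theorem commute_of_mem_closure_pair {a b c g : G} (ha : Commute a c) (hb : Commute b c)
    (hg : g ∈ Subgroup.closure {a, b}) : Commute g c :=
  commute_of_mem_closure (t := {c}) (by simp [ha, hb]) hg (Subgroup.mem_closure_singleton_self c)

theorem inv_map_mem_closure_pair {H : Type*} [Group H] (f : G →* H) {a b g : G}
    (hg : g ∈ Subgroup.closure {a, b}) : (f g)⁻¹ ∈ Subgroup.closure {(f a)⁻¹, (f b)⁻¹} := by
  have closure_le : Subgroup.closure {a, b} ≤ (Subgroup.closure {(f a)⁻¹, (f b)⁻¹}).comap f :=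
    (Subgroup.closure_le _).2 (Set.pair_subset
      (inv_mem_iff.1 (Subgroup.subset_closure (by simp)))
      (inv_mem_iff.1 (Subgroup.subset_closure (by simp))))
  exact inv_mem (closure_le hg)

theorem of_mem_closure_pair_of_twoOutOfThree {a b : G} (hab : Commute a b) {P : G → Prop}
    (hP : ∀ g ∈ Subgroup.closure {a, b}, TwoOutOfThree (P g) (P (a * g)) (P (b * g)))
    (hP' : ∀ g ∈ Subgroup.closure {a, b}, TwoOutOfThree (P g) (P (a⁻¹ * g)) (P (b⁻¹ * g)))
    (h_one : P 1) (ha : P a) {g : G} (hg : g ∈ Subgroup.closure {a, b}) : P g := by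
  have haH : a ∈ Subgroup.closure {a, b} := Subgroup.subset_closure (by simp)
  have hbH : b ∈ Subgroup.closure {a, b} := Subgroup.subset_closure (by simp)
  -- The induction carries the edge `{g, a * g}`: a single good vertex would not propagate. Moving
  -- an edge by `b` or `b⁻¹` crosses one triangle of each family.
  have up {g : G} (hg : g ∈ Subgroup.closure {a, b}) (h : P g ∧ P (a * g)) :
      P (b * g) ∧ P (a * (b * g)) := by
    have hb := (hP g hg).trd h.1 h.2
    have tri := hP' (a * (b * g)) (mul_mem haH (mul_mem hbH hg))
    rw [inv_mul_cancel_left, hab.left_comm, inv_mul_cancel_left, ← hab.left_comm] at tri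
    exact ⟨hb, tri.fst hb h.2⟩
  have down {g : G} (hg : g ∈ Subgroup.closure {a, b}) (h : P g ∧ P (a * g)) :
      P (b⁻¹ * g) ∧ P (a * (b⁻¹ * g)) := by
    have tri' := hP' (a * g) (mul_mem haH hg)
    rw [inv_mul_cancel_left, ← hab.inv_right.left_comm] at tri'
    have tri := hP (b⁻¹ * g) (mul_mem (inv_mem hbH) hg)
    rw [mul_inv_cancel_left] at tri
    have hab' := tri'.trd h.2 h.1
    exact ⟨tri.fst hab' h.1, hab'⟩
  have right {g : G} (hg : g ∈ Subgroup.closure {a, b}) (h : P g ∧ P (a * g)) :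
      P (a * g) ∧ P (a * (a * g)) := by
    have tri := hP (a * g) (mul_mem haH hg)
    rw [← hab.left_comm] at tri
    exact ⟨h.2, tri.snd h.2 (up hg h).2⟩
  have left {g : G} (hg : g ∈ Subgroup.closure {a, b}) (h : P g ∧ P (a * g)) :
      P (a⁻¹ * g) ∧ P (a * (a⁻¹ * g)) := by
    rw [mul_inv_cancel_left]
    exact ⟨(hP' g hg).snd h.1 (down hg h).1, h.1⟩
  suffices P g ∧ P (a * g) from this.1
  induction hg using Subgroup.closure_induction_left with
  | one => exact ⟨h_one, by rwa [mul_one]⟩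
  | mul_left c hc g hg ih =>
    obtain rfl | rfl := hc
    exacts [right hg ih, up hg ih]
  | inv_mul_cancel c hc g hg ih =>
    obtain rfl | rfl := hc
    exacts [left hg ih, down hg ih]

end Group

section MulAut

variable {G : Type*} [Group G] {α β γ : MulAut G}

theorem commute_inv_apply_iff {x y : G} : Commute (γ⁻¹ x) y ↔ Commute x (γ y) := by
  rw [← commute_map_iff γ.injective, MulAut.apply_inv_self]

open scoped Pointwise in
theorem apply_mem_of_mem_closure_pair {K : Set G} (hα : α '' K = K) (hβ : β '' K = K)
    (hγ : γ ∈ Subgroup.closure {α, β}) {k : G} (hk : k ∈ K) : γ k ∈ K := by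
  have closure_le : Subgroup.closure {α, β} ≤ MulAction.stabilizer (MulAut G) K :=
    (Subgroup.closure_le _).2 (Set.pair_subset hα hβ)
  have hγK : γ • K = K := closure_le hγ
  exact hγK ▸ Set.smul_mem_smul_set hk

theorem MutuallyGenerated.twoOutOfThree_commute_apply {K : Set G} {x w : G}
    (h : MutuallyGenerated K x (α x) (β x)) (hα : α '' K = K) (hβ : β '' K = K)
    (hK : ∀ k ∈ K, Commute k w) (hγ : γ ∈ Subgroup.closure {α, β}) :
    TwoOutOfThree (Commute (γ x) w) (Commute ((γ * α) x) w) (Commute ((γ * β) x) w) := by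
  have mem_iff (z : G) :
      z ∈ (Subgroup.centralizer {w}).comap γ.toMonoidHom ↔ Commute (γ z) w :=
    Subgroup.mem_centralizer_singleton_iff
  have hKC : K ⊆ (Subgroup.centralizer {w}).comap γ.toMonoidHom := fun k hk ↦
    (mem_iff k).2 (hK _ (apply_mem_of_mem_closure_pair hα hβ hγ hk))
  simpa only [mem_iff, MulAut.mul_apply] using h.twoOutOfThree_mem hKC

theorem commute_apply_of_mutuallyGenerated {U₀ W₀ : Set G} {u w : G} (hαβ : Commute α β)
    (hu : MutuallyGenerated U₀ u (α u) (β u)) (hw : MutuallyGenerated W₀ w (α w) (β w))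
    (huw : Commute u w) (hαuw : Commute (α u) w)
    (hαU₀ : α '' U₀ = U₀) (hβU₀ : β '' U₀ = U₀) (hαW₀ : α '' W₀ = W₀) (hβW₀ : β '' W₀ = W₀)
    (hU₀ : ∀ x ∈ U₀, Commute x w) (hW₀ : ∀ y ∈ W₀, Commute u y)
    (hγ : γ ∈ Subgroup.closure {α, β}) : Commute (γ u) w := by
  refine of_mem_closure_pair_of_twoOutOfThree (P := fun γ ↦ Commute (γ u) w) hαβ
    (fun γ hγ ↦ ?_) (fun γ hγ ↦ ?_) huw hαuw hγ
  · have hγα : Commute γ α := commute_of_mem_closure_pair (.refl α) hαβ.symm hγ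
    have hγβ : Commute γ β := commute_of_mem_closure_pair hαβ (.refl β) hγ
    rw [← hγα.eq, ← hγβ.eq]
    exact hu.twoOutOfThree_commute_apply hαU₀ hβU₀ hU₀ hγ
  · have swap (δ : MulAut G) : Commute (δ⁻¹ w) u ↔ Commute (δ u) w :=
      commute_inv_apply_iff.trans Commute.symm_iff
    have tri := hw.twoOutOfThree_commute_apply hαW₀ hβW₀ (fun y hy ↦ (hW₀ y hy).symm)
      (inv_mem hγ)
    rwa [← inv_inv α, ← inv_inv β, ← mul_inv_rev, ← mul_inv_rev, swap, swap, swap] at tri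

theorem bcrw_trick_nonabelian_general {U₀ W₀ : Set G} {u w : G} (hαβ : Commute α β)
    (hu : MutuallyGenerated U₀ u (α u) (β u)) (hw : MutuallyGenerated W₀ w (α w) (β w))
    (huw : Commute u w) (hαuw : Commute (α u) w)
    (hαU₀ : α '' U₀ = U₀) (hβU₀ : β '' U₀ = U₀) (hαW₀ : α '' W₀ = W₀) (hβW₀ : β '' W₀ = W₀)
    (hU₀ : ∀ x ∈ U₀, Commute x w) (hW₀ : ∀ y ∈ W₀, Commute u y) :
    ∀ x ∈ Subgroup.closure {z | ∃ γ ∈ Subgroup.closure {α, β}, z = γ u},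
      ∀ y ∈ Subgroup.closure {z | ∃ γ ∈ Subgroup.closure {α, β}, z = γ w}, Commute x y := by
  refine fun x hx y hy ↦ commute_of_mem_closure ?_ hx hy
  rintro _ ⟨γ, hγ, rfl⟩ _ ⟨δ, hδ, rfl⟩
  rw [← commute_inv_apply_iff, ← MulAut.mul_apply]
  exact commute_apply_of_mutuallyGenerated hαβ hu hw huw hαuw hαU₀ hβU₀ hαW₀ hβW₀ hU₀ hW₀
    (mul_mem (inv_mem hδ) hγ)

theorem conjugates_subset_images_inv_conj (a b v : G) :
    {z | ∃ g ∈ Subgroup.closure {a, b}, z = g⁻¹ * v * g} ⊆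
      {z | ∃ γ ∈ Subgroup.closure {(MulAut.conj a)⁻¹, (MulAut.conj b)⁻¹}, z = γ v} := by
  rintro _ ⟨g, hg, rfl⟩
  exact ⟨(MulAut.conj g)⁻¹, inv_map_mem_closure_pair MulAut.conj hg, rfl⟩

end MulAut

/-- **The nonabelian BCRW trick.** Under the hypotheses (1)–(6) below, every element of
the subgroup generated by the `⟨a,b⟩`-conjugates of `u` commutes with every element of
the subgroup generated by the `⟨a,b⟩`-conjugates of `w`. -/
theorem bcrw_trick_nonabelian {G : Type} [Group G] (U₀ W₀ : Subgroup G) (u w a b : G)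
    -- (1)
    (hab : a * b = b * a)
    -- (2)
    (hu1 : u ∈ Subgroup.closure (({a⁻¹ * u * a, b⁻¹ * u * b} : Set G) ∪ (U₀ : Set G)))
    (hu2 : a⁻¹ * u * a ∈ Subgroup.closure (({u, b⁻¹ * u * b} : Set G) ∪ (U₀ : Set G)))
    (hu3 : b⁻¹ * u * b ∈ Subgroup.closure (({u, a⁻¹ * u * a} : Set G) ∪ (U₀ : Set G)))
    -- (3)
    (hw1 : w ∈ Subgroup.closure (({a⁻¹ * w * a, b⁻¹ * w * b} : Set G) ∪ (W₀ : Set G)))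
    (hw2 : a⁻¹ * w * a ∈ Subgroup.closure (({w, b⁻¹ * w * b} : Set G) ∪ (W₀ : Set G)))
    (hw3 : b⁻¹ * w * b ∈ Subgroup.closure (({w, a⁻¹ * w * a} : Set G) ∪ (W₀ : Set G)))
    -- (4)
    (h4a : Commute u w) (h4b : Commute (a⁻¹ * u * a) w)
    -- (5)
    (h5a : (fun x => a⁻¹ * x * a) '' (U₀ : Set G) = (U₀ : Set G))
    (h5b : (fun x => b⁻¹ * x * b) '' (U₀ : Set G) = (U₀ : Set G))
    (h5c : (fun x => a⁻¹ * x * a) '' (W₀ : Set G) = (W₀ : Set G))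
    (h5d : (fun x => b⁻¹ * x * b) '' (W₀ : Set G) = (W₀ : Set G))
    -- (6)
    (h6a : ∀ x ∈ U₀, Commute x w) (h6b : ∀ y ∈ W₀, Commute u y) :
    ∀ x ∈ Subgroup.closure
        {z : G | ∃ g ∈ Subgroup.closure ({a, b} : Set G), z = g⁻¹ * u * g},
      ∀ y ∈ Subgroup.closure
        {z : G | ∃ g ∈ Subgroup.closure ({a, b} : Set G), z = g⁻¹ * w * g},
        Commute x y := fun x hx y hy ↦
  bcrw_trick_nonabelian_general (α := (MulAut.conj a)⁻¹) (β := (MulAut.conj b)⁻¹)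
    (Commute.map hab MulAut.conj).inv_inv ⟨hu1, hu2, hu3⟩ ⟨hw1, hw2, hw3⟩ h4a h4b
    h5a h5b h5c h5d h6a h6b
    x (Subgroup.closure_mono (conjugates_subset_images_inv_conj a b u) hx)
    y (Subgroup.closure_mono (conjugates_subset_images_inv_conj a b w) hy)
end

section
/- Let k ≥ 1, let 𝓜 be a finite collection of finite subsets of ℤ^k, and let |·| : ℤ^k → ℝ be a function taking nonnegative values such that for every real r the set {v ∈ ℤ^k : |v| ≤ r} is finite. Call S ⊆ ℤ^k closed if for every v ∈ ℤ^k and every M ∈ 𝓜, whenever S contains all but at most one element of the translate v + M = {v + m : m ∈ M}, then v + M ⊆ S. Call w ∈ ℤ^k reducible if there exist u ∈ ℤ^k and M ∈ 𝓜 such that w ∈ u + M and |w| > |x| for every element x of u + M other than w; call w irreducible otherwise. If S ⊆ ℤ^k is closed and contains every irreducible vector, then S = ℤ^k. -/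
/-!
Rank the points by a well-founded relation. A reducible point `w` lies in some `E i` all of whose
other points precede `w`, so by induction they lie in `S`, and closedness then puts `w` into `S`.
For a length function with finite balls, being strictly shorter is such a relation, as only
finitely many points are shorter than a given one.
-/

open scoped Pointwise

variable {α β ι G : Type*}

/-- The sets `S` closed for the family `E`: one containing all points of some `E i` except possibly
`a ∈ E i` also contains `a`. The paper concludes `E i ⊆ S`; this is equivalent, as only the
exceptional point `a` can be missing. -/
def IsCompletionClosed (E : ι → Set α) (S : Set α) : Prop :=
  ∀ i, ∀ a ∈ E i, E i \ {a} ⊆ S → a ∈ S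

/-- The reducible points of the family `E`, with an arbitrary relation `r` in the role of
shorter than: those which lie in some `E i` and are its unique longest element. -/
def IsReducible (E : ι → Set α) (r : α → α → Prop) (w : α) : Prop :=
  ∃ i, w ∈ E i ∧ ∀ x ∈ E i, x ≠ w → r x w

/-- The family of all translates `v + M i`, indexed by the pairs `(v, i)`. -/
def translates [Add G] (M : ι → Set G) : G × ι → Set G :=
  fun p => p.1 +ᵥ M p.2

theorem isCompletionClosed_translates_iff [Add G] [IsLeftCancelAdd G] {M : ι → Set G} {S : Set G} :
    IsCompletionClosed (translates M) S ↔
      ∀ v i, (∃ m₀, ∀ m ∈ M i, m ≠ m₀ → v + m ∈ S) → ∀ m ∈ M i, v + m ∈ S := by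
  have diff_subset_iff (v m₀ : G) (i : ι) :
      (v +ᵥ M i) \ {v + m₀} ⊆ S ↔ ∀ m ∈ M i, m ≠ m₀ → v + m ∈ S := by
    simp [Set.subset_def, Set.mem_vadd_set]
  constructor
  · rintro hS v i ⟨m₀, h⟩ m hm
    obtain rfl | hne := eq_or_ne m m₀
    · exact hS (v, i) _ (Set.vadd_mem_vadd_set hm) ((diff_subset_iff v m i).2 h)
    · exact h m hm hne
  · rintro hS ⟨v, i⟩ _ ⟨m₀, hm₀, rfl⟩ h
    exact hS v i ⟨m₀, (diff_subset_iff v m₀ i).1 h⟩ m₀ hm₀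

theorem isReducible_translates_iff [Add G] {M : ι → Set G} {r : G → G → Prop} {w : G} :
    IsReducible (translates M) r w ↔
      ∃ u i, (∃ m ∈ M i, w = u + m) ∧ ∀ m ∈ M i, u + m ≠ w → r (u + m) w := by
  simp [IsReducible, translates, Set.mem_vadd_set, eq_comm (a := w)]

theorem wellFounded_of_finite_setOf_rel {r : α → α → Prop} [IsStrictOrder α r]
    (h : ∀ a, {b | r b a}.Finite) : WellFounded r := by
  refine ⟨fun a => (Set.WellFoundedOn.acc_iff_wellFoundedOn.out 0 2).2 ?_⟩
  simpa only [Relation.transGen_eq_self] using (h a).wellFoundedOn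

theorem wellFounded_lt_of_finite_setOf_lt [Preorder β] {f : α → β}
    (h : ∀ a, {b | f b < f a}.Finite) : WellFounded fun a b => f a < f b := by
  have : IsStrictOrder α fun a b => f a < f b :=
    { irrefl a := lt_irrefl (f a), trans _ _ _ := lt_trans }
  exact wellFounded_of_finite_setOf_rel h

theorem closed_set_containing_irreducibles_eq_univ_general {E : ι → Set α} {r : α → α → Prop}
    (hr : WellFounded r) {S : Set α} (hclosed : IsCompletionClosed E S)
    (hirr : ∀ w, ¬ IsReducible E r w → w ∈ S) : S = Set.univ := by
  refine Set.eq_univ_of_forall fun w => hr.induction w fun w ih => ?_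
  by_cases hw : IsReducible E r w
  · obtain ⟨i, hwi, hlt⟩ := hw
    exact hclosed i w hwi fun x ⟨hx, hne⟩ => ih x (hlt x hx hne)
  · exact hirr w hw

/-- Let `𝓜` be a finite collection of finite subsets of `ℤ^k` and fix a nonnegative
length function with finite balls.  If `S ⊆ ℤ^k` is closed (whenever `S` contains all
but at most one element of a translate `v + M` of some `M ∈ 𝓜`, it contains the whole
translate) and contains every irreducible vector (a vector is reducible if it is the
unique longest element of some translate `u + M`), then `S = ℤ^k`. -/
theorem closed_set_containing_irreducibles_eq_univ
    (k : ℕ) (hk : 1 ≤ k)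
    (𝓜 : Finset (Finset (Fin k → ℤ)))
    (len : (Fin k → ℤ) → ℝ)
    (hlen_nonneg : ∀ v, 0 ≤ len v)
    (hlen_fin : ∀ r : ℝ, {v : Fin k → ℤ | len v ≤ r}.Finite)
    (S : Set (Fin k → ℤ))
    (hclosed : ∀ (v : Fin k → ℤ), ∀ M ∈ 𝓜,
      (∃ m₀ : Fin k → ℤ, ∀ m ∈ M, m ≠ m₀ → v + m ∈ S) → ∀ m ∈ M, v + m ∈ S)
    (hirr : ∀ w : Fin k → ℤ,
      ¬ (∃ u : Fin k → ℤ, ∃ M ∈ 𝓜, (∃ m ∈ M, w = u + m) ∧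
          ∀ m ∈ M, u + m ≠ w → len (u + m) < len w) →
        w ∈ S) :
    S = Set.univ := by
  have hwf : WellFounded fun v w => len v < len w :=
    wellFounded_lt_of_finite_setOf_lt fun w =>
      (hlen_fin (len w)).subset (Set.ofPred_subset_ofPred.2 fun _ => le_of_lt)
  exact closed_set_containing_irreducibles_eq_univ_general hwf
    (isCompletionClosed_translates_iff.2 fun v (M : 𝓜) => hclosed v M M.2)
    fun w hw => hirr w fun ⟨u, M, hM, h⟩ => hw (isReducible_translates_iff.2 ⟨u, ⟨M, hM⟩, h⟩)
end

section
/- Let p be a prime and let F be a finite field of characteristic p with |F| = q, where q ∉ {2, 3, 5, 9}. Then there exist nonzero elements a, b ∈ F with b² = a² + 1 such that a² generates F over its prime field, i.e., the F_p-subalgebra of F generated by a² equals all of F. -/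
/-!
Put `a = (g - g⁻¹) / 2` and `b = (g + g⁻¹) / 2` for a generator `g` of `Fˣ`, so that
`b² = a² + 1` and `g² + g⁻² = 4a² + 2`. A subring `K` containing `a²` is a field, say of order
`r`, and `y ↦ y ^ r` fixes `g² + g⁻²`, hence sends `g²` to itself or to its inverse. So `g²`, whose
order is `(q - 1) / 2`, has order at most `r + 1`. If `K` were proper then also `r² ≤ q`, which
for odd `q` leaves only `r = 3`, `q = 9`. In characteristic two one takes `a² = g`, `b = a + 1`.
-/

theorem add_inv_eq_add_inv_iff {F : Type*} [Field F] {x y : F} (hx : x ≠ 0) (hy : y ≠ 0) :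
    x + x⁻¹ = y + y⁻¹ ↔ x = y ∨ x * y = 1 := by
  have factorization : x + x⁻¹ - (y + y⁻¹) = (x - y) * (x * y - 1) / (x * y) := by
    field_simp
    ring
  rw [← sub_eq_zero, factorization, div_eq_zero_iff, or_iff_left (mul_ne_zero hx hy),
    mul_eq_zero, sub_eq_zero, sub_eq_zero]

theorem sub_inv_ne_zero_and_add_inv_ne_zero {F : Type*} [Field F] {x : F} (hx₀ : x ≠ 0)
    (hx : x ^ 4 ≠ 1) : x - x⁻¹ ≠ 0 ∧ x + x⁻¹ ≠ 0 := by
  have factorization : (x - x⁻¹) * (x + x⁻¹) = (x ^ 4 - 1) / x ^ 2 := by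
    field_simp
    ring
  rw [← mul_ne_zero_iff, factorization]
  exact div_ne_zero (sub_ne_zero.2 hx) (pow_ne_zero 2 hx₀)

section FiniteBaseField

variable {K F : Type*} [Field K] [Field F] [Algebra K F]

theorem pow_natCard_add_inv_eq_of_add_inv_mem_range [Finite K] {x : F}
    (hx : x + x⁻¹ ∈ Set.range (algebraMap K F)) :
    x ^ Nat.card K + (x ^ Nat.card K)⁻¹ = x + x⁻¹ := by
  have := Fintype.ofFinite K
  obtain ⟨y, hy⟩ := hx
  have frobenius_fixes := (FiniteField.frobeniusAlgHom K F).commutes y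
  rwa [hy, map_add, map_inv₀, FiniteField.coe_frobeniusAlgHom,
    Fintype.card_eq_nat_card] at frobenius_fixes

theorem orderOf_le_natCard_add_one_of_add_inv_mem_range [Finite K] {x : F}
    (hx : x + x⁻¹ ∈ Set.range (algebraMap K F)) : orderOf x ≤ Nat.card K + 1 := by
  rcases eq_or_ne x 0 with rfl | hx₀
  · simp only [orderOf_zero, Nat.zero_le]
  have card_pos : 0 < Nat.card K - 1 := Nat.sub_pos_of_lt Finite.one_lt_card
  rcases (add_inv_eq_add_inv_iff (pow_ne_zero _ hx₀) hx₀).1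
    (pow_natCard_add_inv_eq_of_add_inv_mem_range hx) with fixed | inverted
  · have pow_eq_one : x ^ (Nat.card K - 1) = 1 := by
      rw [pow_sub₀ x hx₀ Finite.card_pos, fixed, pow_one, mul_inv_cancel₀ hx₀]
    exact (orderOf_le_of_pow_eq_one card_pos pow_eq_one).trans (by omega)
  · exact orderOf_le_of_pow_eq_one (Nat.succ_pos _) (by rwa [pow_succ])

theorem natCard_sq_le_of_not_surjective_algebraMap [Finite F]
    (h : ¬ Function.Surjective (algebraMap K F)) : Nat.card K ^ 2 ≤ Nat.card F := by
  have := Finite.of_injective _ (algebraMap K F).injective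
  have finrank_ne_one : Module.finrank K F ≠ 1 := by
    rwa [Algebra.surjective_algebraMap_iff, eq_comm,
      Subalgebra.bot_eq_top_iff_finrank_eq_one] at h
  have finrank_pos : 0 < Module.finrank K F := Module.finrank_pos
  rw [Module.natCard_eq_pow_finrank (K := K) (V := F)]
  exact Nat.pow_le_pow_right Finite.card_pos (by omega)

theorem surjective_algebraMap_of_add_inv_mem_range [Finite F] (hodd : Odd (Nat.card F))
    (h9 : Nat.card F ≠ 9) {x : F} (hord : Nat.card F ≤ 2 * orderOf x + 1)
    (hx : x + x⁻¹ ∈ Set.range (algebraMap K F)) : Function.Surjective (algebraMap K F) := by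
  by_contra hsurj
  have := Finite.of_injective _ (algebraMap K F).injective
  have lower : Nat.card K ^ 2 ≤ Nat.card F := natCard_sq_le_of_not_surjective_algebraMap hsurj
  have upper : orderOf x ≤ Nat.card K + 1 := orderOf_le_natCard_add_one_of_add_inv_mem_range hx
  have odd_card : Odd (Nat.card K) := by
    rw [Module.natCard_eq_pow_finrank (K := K) (V := F)] at hodd
    exact (Nat.odd_pow_iff Module.finrank_pos.ne').1 hodd
  have card_gt : 1 < Nat.card K := Finite.one_lt_card
  have card_le : Nat.card K ≤ 3 := by nlinarith
  have card_eq : Nat.card K = 3 := by grind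
  rw [card_eq] at lower upper
  omega

end FiniteBaseField

theorem subring_eq_top_of_add_inv_mem {F : Type*} [Field F] [Finite F] (hodd : Odd (Nat.card F))
    (h9 : Nat.card F ≠ 9) {x : F} (hord : Nat.card F ≤ 2 * orderOf x + 1)
    {S : Subring F} (hx : x + x⁻¹ ∈ S) : S = ⊤ := by
  let : Field S := (Finite.isField_of_domain S).toField
  refine S.eq_top_iff'.2 fun y ↦ ?_
  obtain ⟨s, rfl⟩ :=
    surjective_algebraMap_of_add_inv_mem_range (K := S) hodd h9 hord ⟨⟨_, hx⟩, rfl⟩ y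
  exact s.2

theorem subring_closure_singleton_eq_top_of_forall_mem_powers {F : Type*} [DivisionRing F] {g : Fˣ}
    (hg : ∀ u, u ∈ Submonoid.powers g) : Subring.closure {(g : F)} = ⊤ := by
  refine (Subring.eq_top_iff' _).2 fun x ↦ ?_
  rcases eq_or_ne x 0 with rfl | hx
  · exact zero_mem _
  · obtain ⟨n, hn⟩ := hg (Units.mk0 x hx)
    have hpow : (g : F) ^ n = x := congrArg Units.val hn
    rw [← hpow]
    exact pow_mem (Subring.mem_closure_of_mem (Set.mem_singleton _)) n

theorem orderOf_dvd_mul_orderOf_pow {M : Type*} [Monoid M] (x : M) (n : ℕ) :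
    orderOf x ∣ n * orderOf (x ^ n) :=
  orderOf_dvd_of_pow_eq_one (by rw [pow_mul, pow_orderOf_eq_one])

theorem exists_generating_pythagorean_pair_of_charTwo {F : Type*} [Field F] [Finite F] [CharP F 2]
    (h2 : Nat.card F ≠ 2) :
    ∃ a b : F, a ≠ 0 ∧ b ≠ 0 ∧ b ^ 2 = a ^ 2 + 1 ∧ Subring.closure {a ^ 2} = ⊤ := by
  obtain ⟨g, hg⟩ := IsCyclic.exists_monoid_generator (α := Fˣ)
  obtain ⟨a, ha⟩ := (isSquare_iff_exists_sq (g : F)).1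
    (FiniteField.isSquare_of_char_two (ringChar.eq F 2) g)
  have g_ne_one : g ≠ 1 := by
    rintro rfl
    have card_units : Nat.card Fˣ = 1 := by
      rw [← orderOf_eq_card_of_forall_mem_powers hg, orderOf_one]
    have one_lt_card : 1 < Nat.card F := Finite.one_lt_card
    rw [Nat.card_units] at card_units
    omega
  have sq_add_one : (a + 1) ^ 2 = a ^ 2 + 1 := by rw [CharTwo.add_sq, one_pow]
  refine ⟨a, a + 1, ?_, fun hb ↦ ?_, sq_add_one, ?_⟩
  · exact (pow_ne_zero_iff two_ne_zero).1 (ha ▸ g.ne_zero)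
  · rw [hb, zero_pow two_ne_zero, ← ha, eq_comm, CharTwo.add_eq_zero] at sq_add_one
    exact g_ne_one (Units.ext sq_add_one)
  · exact ha ▸ subring_closure_singleton_eq_top_of_forall_mem_powers hg

theorem exists_generating_pythagorean_pair_of_odd_natCard {F : Type*} [Field F] [Finite F]
    (hodd : Odd (Nat.card F)) (h5 : 5 < Nat.card F) (h9 : Nat.card F ≠ 9) :
    ∃ a b : F, a ≠ 0 ∧ b ≠ 0 ∧ b ^ 2 = a ^ 2 + 1 ∧ Subring.closure {a ^ 2} = ⊤ := by
  obtain ⟨u, hu⟩ := IsCyclic.exists_ofOrder_eq_natCard (α := Fˣ)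
  set g : F := (u : F) with hg
  have order_g : orderOf g = Nat.card F - 1 := by rw [hg, orderOf_units, hu, Nat.card_units]
  have hg₀ : g ≠ 0 := u.ne_zero
  have order_sq : Nat.card F ≤ 2 * orderOf (g ^ 2) + 1 := by
    have order_sq_pos : 0 < orderOf (g ^ 2) :=
      Nat.pos_of_dvd_of_pos (orderOf_pow_dvd 2) (by omega)
    have := Nat.le_of_dvd (by omega) (orderOf_dvd_mul_orderOf_pow g 2)
    omega
  have h2 : (2 : F) ≠ 0 := Ring.two_ne_zero fun h ↦ by
    have := Fintype.ofFinite F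
    rw [FiniteField.even_card_iff_char_two, Fintype.card_eq_nat_card] at h
    grind
  have pow_four_ne_one : g ^ 4 ≠ 1 := fun h ↦ by
    have := orderOf_le_of_pow_eq_one four_pos h
    omega
  obtain ⟨ha₀, hb₀⟩ := sub_inv_ne_zero_and_add_inv_ne_zero hg₀ pow_four_ne_one
  refine ⟨(g - g⁻¹) / 2, (g + g⁻¹) / 2, div_ne_zero ha₀ h2, div_ne_zero hb₀ h2,
    by field_simp; ring, ?_⟩
  refine subring_eq_top_of_add_inv_mem hodd h9 order_sq ?_
  have sq_add_inv_sq : g ^ 2 + (g ^ 2)⁻¹ = 4 * ((g - g⁻¹) / 2) ^ 2 + 2 := by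
    field_simp
    ring
  rw [sq_add_inv_sq]
  exact add_mem (mul_mem (ofNat_mem _ 4) (Subring.mem_closure_of_mem rfl)) (ofNat_mem _ 2)

/-- In a finite field `F` of characteristic `p` and order `q ∉ {2, 3, 5, 9}`, there are
nonzero elements `a, b` with `b² = a² + 1` such that `a²` generates `F` over its prime
field (i.e. the smallest subring of `F` containing `a²` is all of `F`). -/
theorem exists_generating_pythagorean_pair
    (F : Type) [Field F] [Fintype F] (p : ℕ) (hp : p.Prime) [CharP F p]
    (h2 : Fintype.card F ≠ 2) (h3 : Fintype.card F ≠ 3)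
    (h5 : Fintype.card F ≠ 5) (h9 : Fintype.card F ≠ 9) :
    ∃ a b : F, a ≠ 0 ∧ b ≠ 0 ∧ b ^ 2 = a ^ 2 + 1 ∧
      Subring.closure ({a ^ 2} : Set F) = ⊤ := by
  have one_lt_card : 1 < Fintype.card F := Fintype.one_lt_card
  rcases eq_or_ne p 2 with rfl | hp2
  · exact exists_generating_pythagorean_pair_of_charTwo (by rwa [Nat.card_eq_fintype_card])
  · have odd_card : Odd (Fintype.card F) :=
      Nat.odd_iff.2 (FiniteField.odd_card_of_char_ne_two (ringChar.eq F p ▸ hp2))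
    have five_lt_card : 5 < Fintype.card F := by grind
    rw [Fintype.card_eq_nat_card] at odd_card five_lt_card h9
    exact exists_generating_pythagorean_pair_of_odd_natCard odd_card five_lt_card h9
end

section
/- Let p be a prime, q = p^e a power of p, and F a finite field with |F| = q². (1) If q is odd and q ∉ {3, 5}, then there exist a, b ∈ F with a^{2q−1} + b^{2q−1} = 1 and a^{q+1} + b^{q+1} = 1, such that the F_p-subalgebra of F generated by a^{2q−1} is all of F, and the F_p-subalgebra of F generated by a^{q+1} has exactly q elements. (2) If q = 2^e with e ≥ 2, then there exist a, b ∈ F with a^{2q−1} + b^{2q−1} = 1 and a^{q+1} + b^{q+1} = 1, such that the F_p-subalgebra of F generated by a^{q+1} and the F_p-subalgebra of F generated by a^{2q−1} each have exactly q elements. -/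
/-!
Over a finite field of characteristic `p`, an element `x` generates a subfield with `p ^ m`
elements, where `m` is the period of `x` under Frobenius, so everything reduces to computing such
periods.

For odd `q = p ^ e`, take `s` of order `q + 1`, so that `s ^ q = s⁻¹`, and put
`a = (1 + s ^ 3) / (2 * s ^ 2)`. Then `a ^ q = s * a`, whence
`a ^ (2 * q - 1) = s ^ 2 * a = (1 + s ^ 3) / 2` and
`a ^ (q + 1) = s * a ^ 2 = (2 + s ^ 3 + s ^ (-3)) / 4`.
Replacing `s` by `-s` gives `b`, and the powers of `s ^ 3` cancel in both sums. If
`s ^ 3 + s ^ (-3)` lay in a proper subfield of `𝔽_q`, with `r` elements, then `q + 1` would divide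
`3 * (r - 1)` or `3 * (r + 1)`, which is impossible since `q` is a multiple of `r ^ 2`. The map
`x ↦ x ^ q` moves `s ^ 3` unless `q + 1 ∣ 6`, that is, unless `q = 5`.

For even `q`, a generator `a` of `𝔽_qˣ` and `b = 1 + a` satisfy `a ^ q = a` and `b ^ q = b`, so
both equations hold by additivity of squaring.
-/

open Function Polynomial

theorem isPeriodicPt_frobenius_iff {R : Type*} [CommSemiring R] {p n : ℕ} [ExpChar R p] {x : R} :
    IsPeriodicPt (frobenius R p) n x ↔ x ^ p ^ n = x := by
  rw [IsPeriodicPt, IsFixedPt, iterate_frobenius]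

theorem minimalPeriod_frobenius_pos {R : Type*} [CommRing R] [IsReduced R] [Finite R] {p : ℕ}
    [ExpChar R p] (x : R) : 0 < minimalPeriod (frobenius R p) x :=
  minimalPeriod_pos_of_mem_periodicPts ((frobenius_inj R p).mem_periodicPts x)

section ClosureCard

theorem ncard_setOf_pow_eq_self_le {R : Type*} [CommRing R] [IsDomain R] {n : ℕ} (hn : 1 < n) :
    {x : R | x ^ n = x}.ncard ≤ n := by
  have hmonic : (X ^ n - X : R[X]).Monic := monic_X_pow_sub (by simpa using hn)
  have hroots : {x : R | x ^ n = x} = (X ^ n - X : R[X]).rootSet R := by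
    ext x
    simp [mem_rootSet, hmonic.ne_zero, sub_eq_zero]
  have hdegree : (X ^ n - X : R[X]).natDegree ≤ n := by
    compute_degree!
    exact hn.le
  exact hroots ▸ (ncard_rootSet_le _ R).trans hdegree

theorem subring_eq_top_of_natCard_eq {R : Type*} [NonAssocRing R] {K : Subring R}
    [Finite K] (h : Nat.card K = Nat.card R) : K = ⊤ :=
  Subring.toAddSubgroup_eq_top.1 (AddSubgroup.eq_top_of_card_eq K.toAddSubgroup h)

theorem exists_natCard_subring_eq_pow {R : Type*} [CommRing R] [IsDomain R] (p : ℕ) [CharP R p]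
    (K : Subring R) [Finite K] :
    ∃ d ≠ 0, Nat.card K = p ^ d ∧ ∀ x ∈ K, x ^ p ^ d = x := by
  classical
  have := Fintype.ofFinite K
  let := Fintype.fieldOfDomain K
  have : CharP K p := inferInstance
  obtain ⟨d, -, hcard⟩ := FiniteField.card K p
  refine ⟨d, d.ne_zero, Nat.card_eq_fintype_card.trans hcard, fun x hx ↦ ?_⟩
  have hpow := FiniteField.pow_card (⟨x, hx⟩ : K)
  rw [hcard] at hpow
  simpa using congrArg Subtype.val hpow

variable {F : Type*} [Field F] [Finite F] {p : ℕ} [Fact p.Prime] [CharP F p]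

theorem natCard_closure_singleton_le (x : F) :
    Nat.card (Subring.closure {x}) ≤ p ^ minimalPeriod (frobenius F p) x := by
  set m := minimalPeriod (frobenius F p) x
  have hx : Set.EqOn (iterateFrobenius F p m) (RingHom.id F) {x} := by
    rw [Set.eqOn_singleton]
    exact isPeriodicPt_frobenius_iff.1 (isPeriodicPt_minimalPeriod _ x)
  have hm : 1 < p ^ m :=
    Nat.one_lt_pow (minimalPeriod_frobenius_pos x).ne' (Fact.out : p.Prime).one_lt
  exact (Set.ncard_le_ncard (RingHom.eqOn_set_closure hx)).trans (ncard_setOf_pow_eq_self_le hm)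

theorem natCard_closure_singleton (x : F) :
    Nat.card (Subring.closure {x}) = p ^ minimalPeriod (frobenius F p) x := by
  obtain ⟨d, hd, hcard, hfixed⟩ := exists_natCard_subring_eq_pow p (Subring.closure {x})
  have hperiodic : IsPeriodicPt (frobenius F p) d x :=
    isPeriodicPt_frobenius_iff.2 (hfixed x (Subring.subset_closure rfl))
  refine (natCard_closure_singleton_le x).antisymm ?_
  rw [hcard]
  exact Nat.pow_le_pow_right (Fact.out : p.Prime).pos
    (hperiodic.minimalPeriod_le (Nat.pos_of_ne_zero hd))

end ClosureCard

theorem exists_orderOf_eq_of_dvd_natCard_sub_one {F : Type*} [Field F] [Finite F] {n : ℕ}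
    (hn : n ∣ Nat.card F - 1) : ∃ x : F, orderOf x = n := by
  obtain ⟨g, hg⟩ := IsCyclic.exists_ofOrder_eq_natCard (α := Fˣ)
  rw [← Nat.card_units, ← hg] at hn
  refine ⟨(g ^ (orderOf g / n) : Fˣ), ?_⟩
  rw [orderOf_units, orderOf_pow_orderOf_div (orderOf_pos g).ne' hn]

theorem exists_eq_prime_pow_of_natCard_eq_pow {F : Type*} [Field F] [Finite F] {q n : ℕ}
    (hF : Nat.card F = q ^ n) : ∃ p e : ℕ, p.Prime ∧ CharP F p ∧ e ≠ 0 ∧ q = p ^ e := by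
  have := Fintype.ofFinite F
  obtain ⟨p, hchar, k, hp, hcard⟩ := FiniteField.card' F
  rw [← Nat.card_eq_fintype_card, hF] at hcard
  have hn : n ≠ 0 := by
    rintro rfl
    exact Finite.one_lt_card.ne' hF
  obtain ⟨e, -, rfl⟩ := (Nat.dvd_prime_pow hp).1 (hcard ▸ dvd_pow_self q hn)
  refine ⟨p, e, hp, hchar, ?_, rfl⟩
  rintro rfl
  exact Finite.one_lt_card.ne' (hF.trans (by simp))

theorem pow_sub_one_eq_one_of_pow_eq_self {M : Type*} [MonoidWithZero M] [IsRightCancelMulZero M]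
    {x : M} {n : ℕ} (hx : x ≠ 0) (hn : n ≠ 0) (h : x ^ n = x) : x ^ (n - 1) = 1 :=
  (mul_eq_right₀ hx).1 ((pow_sub_one_mul hn x).trans h)

theorem pow_eq_inv_of_pow_add_one_eq_one {M : Type*} [DivisionMonoid M] {x : M} {n : ℕ}
    (h : x ^ (n + 1) = 1) : x ^ n = x⁻¹ :=
  eq_inv_of_mul_eq_one_left ((pow_succ x n).symm.trans h)

theorem pow_two_mul_sub_one_of_pow_eq_mul {M : Type*} [CommMonoid M] {a s : M} {q : ℕ} (hq : q ≠ 0)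
    (h : a ^ q = s * a) : a ^ (2 * q - 1) = s ^ 2 * a := by
  calc a ^ (2 * q - 1) = a ^ q * a ^ (q - 1) := by rw [← pow_add]; congr 1; omega
    _ = s * (a * a ^ (q - 1)) := by rw [h, mul_assoc]
    _ = s ^ 2 * a := by rw [mul_pow_sub_one hq, h, sq, mul_assoc]

theorem pow_add_one_of_pow_eq_mul {M : Type*} [Monoid M] {a s : M} {q : ℕ} (h : a ^ q = s * a) :
    a ^ (q + 1) = s * a ^ 2 := by
  rw [pow_succ, h, mul_assoc, sq]

section Periods

variable {F : Type*} [Field F] {p e : ℕ} [ExpChar F p]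

theorem minimalPeriod_frobenius_of_orderOf_eq (hp : 1 < p) (he : e ≠ 0) {a : F}
    (ha : orderOf a = p ^ e - 1) : minimalPeriod (frobenius F p) a = e := by
  have hq : 1 < p ^ e := Nat.one_lt_pow he hp
  have ha0 : a ≠ 0 := by
    rintro rfl
    rw [orderOf_zero] at ha
    omega
  have hperiodic : IsPeriodicPt (frobenius F p) e a := by
    rw [isPeriodicPt_frobenius_iff, ← pow_sub_one_mul (by omega), ← ha, pow_orderOf_eq_one, one_mul]
  have hpos := hperiodic.minimalPeriod_pos (Nat.pos_of_ne_zero he)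
  set m := minimalPeriod (frobenius F p) a
  have hm : 1 < p ^ m := Nat.one_lt_pow hpos.ne' hp
  have hdvd : p ^ e - 1 ∣ p ^ m - 1 := by
    rw [← ha]
    exact orderOf_dvd_of_pow_eq_one <| pow_sub_one_eq_one_of_pow_eq_self ha0 (by omega) <|
      isPeriodicPt_frobenius_iff.1 (isPeriodicPt_minimalPeriod _ a)
  have hle : p ^ e ≤ p ^ m := by
    have := Nat.le_of_dvd (by omega) hdvd
    omega
  exact (hperiodic.minimalPeriod_le (Nat.pos_of_ne_zero he)).antisymm
    ((Nat.pow_le_pow_iff_right hp).1 hle)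

theorem minimalPeriod_frobenius_add_div {c d : F} (hc : IsFixedPt (frobenius F p) c)
    (hd : IsFixedPt (frobenius F p) d) (hd0 : d ≠ 0) (x : F) :
    minimalPeriod (frobenius F p) ((c + x) / d) = minimalPeriod (frobenius F p) x := by
  refine minimalPeriod_eq_minimalPeriod_iff.2 fun k ↦ ?_
  have hck : c ^ p ^ k = c := isPeriodicPt_frobenius_iff.1 (hc.iterate k)
  have hdk : d ^ p ^ k = d := isPeriodicPt_frobenius_iff.1 (hd.iterate k)
  rw [isPeriodicPt_frobenius_iff, isPeriodicPt_frobenius_iff, div_pow, add_pow_expChar_pow, hck,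
    hdk, div_left_inj' hd0, add_right_inj]

theorem eq_or_mul_eq_one_of_add_inv_eq {w y : F} (hw : w ≠ 0) (hy : y ≠ 0)
    (h : y + y⁻¹ = w + w⁻¹) : y = w ∨ y * w = 1 := by
  have hfactor : (y - w) * (y * w - 1) = 0 := by
    field_simp at h
    linear_combination h
  exact (mul_eq_zero.1 hfactor).imp sub_eq_zero.1 sub_eq_zero.1

theorem pow_eq_one_of_isPeriodicPt_add_inv {w : F} (hw : w ≠ 0) {m : ℕ}
    (h : IsPeriodicPt (frobenius F p) m (w + w⁻¹)) :
    w ^ (p ^ m - 1) = 1 ∨ w ^ (p ^ m + 1) = 1 := by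
  rw [isPeriodicPt_frobenius_iff, add_pow_expChar_pow, inv_pow] at h
  refine (eq_or_mul_eq_one_of_add_inv_eq hw (pow_ne_zero _ hw) h).imp ?_ ?_
  · exact pow_sub_one_eq_one_of_pow_eq_self hw (pow_ne_zero _ (expChar_ne_zero F p))
  · rw [pow_succ]
    exact id

theorem isPeriodicPt_add_inv {w : F} (h : w ^ p ^ e = w⁻¹) :
    IsPeriodicPt (frobenius F p) e (w + w⁻¹) := by
  rw [isPeriodicPt_frobenius_iff, add_pow_expChar_pow, inv_pow, h, inv_inv, add_comm]

theorem not_add_one_dvd_three_mul {q r n : ℕ} (hr : 3 ≤ r) (hq : q ≠ 0) (hrq : r ^ 2 ∣ q)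
    (hn : n ≠ 0) (hnr : n ≤ r + 1) : ¬ q + 1 ∣ 3 * n := by
  intro h
  have hle : q + 1 ≤ 3 * n := Nat.le_of_dvd (by omega) h
  have hrle : r ^ 2 ≤ q := Nat.le_of_dvd (Nat.pos_of_ne_zero hq) hrq
  obtain rfl : r = 3 := by nlinarith
  obtain rfl : q = 9 := by omega
  omega

theorem minimalPeriod_frobenius_cube_add_inv (hp : 3 ≤ p) (he : e ≠ 0) {s : F}
    (hs : orderOf s = p ^ e + 1) :
    minimalPeriod (frobenius F p) (s ^ 3 + (s ^ 3)⁻¹) = e := by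
  have hpow_card : s ^ (p ^ e + 1) = 1 := hs ▸ pow_orderOf_eq_one s
  have hs0 : s ^ 3 ≠ 0 :=
    pow_ne_zero 3 (IsUnit.of_pow_eq_one hpow_card (Nat.succ_ne_zero _)).ne_zero
  have hperiodic : IsPeriodicPt (frobenius F p) e (s ^ 3 + (s ^ 3)⁻¹) := by
    refine isPeriodicPt_add_inv ?_
    rw [pow_right_comm, pow_eq_inv_of_pow_add_one_eq_one hpow_card, inv_pow]
  have hpos := hperiodic.minimalPeriod_pos (Nat.pos_of_ne_zero he)
  obtain ⟨k, hk⟩ := hperiodic.minimalPeriod_dvd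
  have hroot := pow_eq_one_of_isPeriodicPt_add_inv hs0
    (isPeriodicPt_minimalPeriod (frobenius F p) (s ^ 3 + (s ^ 3)⁻¹))
  set m := minimalPeriod (frobenius F p) (s ^ 3 + (s ^ 3)⁻¹)
  by_contra hne
  have hk2 : 2 ≤ k := by
    rcases k with _ | _ | k
    · exact absurd hk (by simpa using he)
    · exact absurd hk (by simpa using Ne.symm hne)
    · omega
  have hr : 3 ≤ p ^ m := hp.trans (Nat.le_self_pow hpos.ne' p)
  have hrq : (p ^ m) ^ 2 ∣ p ^ e := by
    rw [← pow_mul, hk]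
    exact pow_dvd_pow p (Nat.mul_le_mul_left m hk2)
  have hdvd : ∀ n, (s ^ 3) ^ n = 1 → p ^ e + 1 ∣ 3 * n := fun n hn ↦
    hs ▸ orderOf_dvd_of_pow_eq_one (by rw [pow_mul, hn])
  have hq : p ^ e ≠ 0 := pow_ne_zero e (by omega)
  rcases hroot with h | h
  · exact not_add_one_dvd_three_mul hr hq hrq (by omega) (by omega) (hdvd _ h)
  · exact not_add_one_dvd_three_mul hr hq hrq (by omega) le_rfl (hdvd _ h)

theorem minimalPeriod_frobenius_eq_two_mul_of_add_inv (he : e ≠ 0) {w : F} (hw : w ≠ 0)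
    (hw2 : w ^ 2 ≠ 1) (hwq : w ^ p ^ e = w⁻¹)
    (hperiod : minimalPeriod (frobenius F p) (w + w⁻¹) = e) :
    minimalPeriod (frobenius F p) w = 2 * e := by
  have hdvd : e ∣ minimalPeriod (frobenius F p) w := by
    rw [← hperiod, ← isPeriodicPt_iff_minimalPeriod_dvd, isPeriodicPt_frobenius_iff,
      add_pow_expChar_pow, inv_pow,
      isPeriodicPt_frobenius_iff.1 (isPeriodicPt_minimalPeriod (frobenius F p) w)]
  have hdvd_two_mul : minimalPeriod (frobenius F p) w ∣ 2 * e := by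
    rw [← isPeriodicPt_iff_minimalPeriod_dvd, isPeriodicPt_frobenius_iff, mul_comm, pow_mul p,
      sq, pow_mul, hwq, inv_pow, hwq, inv_inv]
  have hne : minimalPeriod (frobenius F p) w ≠ e := by
    intro h
    have hfixed : w⁻¹ = w :=
      hwq.symm.trans (isPeriodicPt_frobenius_iff.1 (h ▸ isPeriodicPt_minimalPeriod _ w))
    exact hw2 (by rw [sq, ← inv_mul_cancel₀ hw, hfixed])
  obtain ⟨k, hk⟩ := hdvd
  rw [hk, mul_comm 2, Nat.mul_dvd_mul_iff_left (Nat.pos_of_ne_zero he),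
    Nat.dvd_prime Nat.prime_two] at hdvd_two_mul
  rcases hdvd_two_mul with rfl | rfl
  · exact absurd hk (by simpa using hne)
  · rw [hk, mul_comm]

end Periods

section Parametrization

variable {F : Type*} [Field F]

/-- A coordinate of the Hermitian curve `a ^ (q + 1) + b ^ (q + 1) = 1`: for odd `q`, an element
`s` with `s ^ (q + 1) = 1` yields its point `(hermitianCoord s, hermitianCoord (-s))`. -/
def hermitianCoord (s : F) : F := (1 + s ^ 3) / (2 * s ^ 2)

theorem sq_mul_hermitianCoord {s : F} (hs : s ≠ 0) :
    s ^ 2 * hermitianCoord s = (1 + s ^ 3) / 2 := by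
  rw [hermitianCoord]
  field_simp

theorem mul_hermitianCoord_sq {s : F} (hs : s ≠ 0) :
    s * hermitianCoord s ^ 2 = (2 + (s ^ 3 + (s ^ 3)⁻¹)) / 2 ^ 2 := by
  rw [hermitianCoord]
  field_simp
  ring

theorem hermitianCoord_pow {p e : ℕ} [ExpChar F p] {s : F} (hs : s ^ (p ^ e + 1) = 1) :
    hermitianCoord s ^ p ^ e = s * hermitianCoord s := by
  have hs0 : s ≠ 0 := (IsUnit.of_pow_eq_one hs (Nat.succ_ne_zero _)).ne_zero
  have hconj : iterateFrobenius F p e s = s⁻¹ := by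
    rw [iterateFrobenius_def, pow_eq_inv_of_pow_add_one_eq_one hs]
  rw [← iterateFrobenius_def]
  simp only [hermitianCoord, map_div₀, map_add, map_mul, map_pow, map_one, map_ofNat, hconj]
  field_simp
  ring

end Parametrization

section OddCharacteristic

variable {F : Type*} [Field F] {p e : ℕ} {s : F}

theorem two_ne_zero_of_three_le_expChar [ExpChar F p] (hp : 3 ≤ p) : (2 : F) ≠ 0 := by
  rcases ‹ExpChar F p› with _ | hprime
  · omega
  · exact mod_cast CharP.cast_ne_zero_of_ne_of_prime F Nat.prime_two (by omega : p ≠ 2)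

theorem hermitianCoord_pow_add_pow_eq_one [ExpChar F p] (h2 : (2 : F) ≠ 0) (hodd : Odd (p ^ e))
    (hs : s ^ (p ^ e + 1) = 1) :
    hermitianCoord s ^ (2 * p ^ e - 1) + hermitianCoord (-s) ^ (2 * p ^ e - 1) = 1 ∧
      hermitianCoord s ^ (p ^ e + 1) + hermitianCoord (-s) ^ (p ^ e + 1) = 1 := by
  have hs0 : s ≠ 0 := (IsUnit.of_pow_eq_one hs (Nat.succ_ne_zero _)).ne_zero
  have hneg : (-s) ^ (p ^ e + 1) = 1 := by rw [hodd.add_one.neg_pow, hs]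
  constructor
  · rw [pow_two_mul_sub_one_of_pow_eq_mul hodd.pos.ne' (hermitianCoord_pow hs),
      pow_two_mul_sub_one_of_pow_eq_mul hodd.pos.ne' (hermitianCoord_pow hneg),
      sq_mul_hermitianCoord hs0, sq_mul_hermitianCoord (neg_ne_zero.2 hs0)]
    field_simp
    ring
  · rw [pow_add_one_of_pow_eq_mul (hermitianCoord_pow hs),
      pow_add_one_of_pow_eq_mul (hermitianCoord_pow hneg),
      mul_hermitianCoord_sq hs0, mul_hermitianCoord_sq (neg_ne_zero.2 hs0),
      Odd.neg_pow (by decide), inv_neg]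
    field_simp
    ring

theorem minimalPeriod_frobenius_hermitianCoord_pow_add_one [ExpChar F p] (hp : 3 ≤ p)
    (he : e ≠ 0) (hs : orderOf s = p ^ e + 1) :
    minimalPeriod (frobenius F p) (hermitianCoord s ^ (p ^ e + 1)) = e := by
  have hs1 : s ^ (p ^ e + 1) = 1 := hs ▸ pow_orderOf_eq_one s
  have hs0 : s ≠ 0 := (IsUnit.of_pow_eq_one hs1 (Nat.succ_ne_zero _)).ne_zero
  rw [pow_add_one_of_pow_eq_mul (hermitianCoord_pow hs1), mul_hermitianCoord_sq hs0,
    minimalPeriod_frobenius_add_div (map_ofNat _ 2) (by rw [IsFixedPt, map_pow, map_ofNat])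
      (pow_ne_zero 2 (two_ne_zero_of_three_le_expChar hp)),
    minimalPeriod_frobenius_cube_add_inv hp he hs]

theorem minimalPeriod_frobenius_hermitianCoord_pow_two_mul_sub_one [ExpChar F p]
    (hp : 3 ≤ p) (he : e ≠ 0) (hq : p ^ e ≠ 5) (hs : orderOf s = p ^ e + 1) :
    minimalPeriod (frobenius F p) (hermitianCoord s ^ (2 * p ^ e - 1)) = 2 * e := by
  have hs1 : s ^ (p ^ e + 1) = 1 := hs ▸ pow_orderOf_eq_one s
  have hs0 : s ≠ 0 := (IsUnit.of_pow_eq_one hs1 (Nat.succ_ne_zero _)).ne_zero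
  have hpq : p ≤ p ^ e := Nat.le_self_pow he p
  have hs6 : (s ^ 3) ^ 2 ≠ 1 := by
    rw [← pow_mul]
    intro h
    have hdvd : p ^ e + 1 ∣ 6 := hs ▸ orderOf_dvd_of_pow_eq_one h
    have hle := Nat.le_of_dvd (by decide) hdvd
    obtain hq | hq : p ^ e = 3 ∨ p ^ e = 4 := by omega
    all_goals norm_num [hq] at hdvd
  have hcube : (s ^ 3) ^ p ^ e = (s ^ 3)⁻¹ := by
    rw [pow_right_comm, pow_eq_inv_of_pow_add_one_eq_one hs1, inv_pow]
  rw [pow_two_mul_sub_one_of_pow_eq_mul (by omega) (hermitianCoord_pow hs1),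
    sq_mul_hermitianCoord hs0,
    minimalPeriod_frobenius_add_div (map_one _) (map_ofNat _ 2)
      (two_ne_zero_of_three_le_expChar hp)]
  exact minimalPeriod_frobenius_eq_two_mul_of_add_inv he (pow_ne_zero 3 hs0) hs6 hcube
    (minimalPeriod_frobenius_cube_add_inv hp he hs)

end OddCharacteristic

section Existence

variable {F : Type*} [Field F] [Finite F] {q : ℕ}

theorem exists_hermitian_closure_of_odd (hF : Nat.card F = q ^ 2) (hodd : Odd q) (h5 : q ≠ 5) :
    ∃ a b : F, a ^ (2 * q - 1) + b ^ (2 * q - 1) = 1 ∧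
      a ^ (q + 1) + b ^ (q + 1) = 1 ∧
      Subring.closure ({a ^ (2 * q - 1)} : Set F) = ⊤ ∧
      Nat.card (Subring.closure ({a ^ (q + 1)} : Set F)) = q := by
  obtain ⟨p, e, hp, _, he, rfl⟩ := exists_eq_prime_pow_of_natCard_eq_pow hF
  have : Fact p.Prime := ⟨hp⟩
  have hp3 : 3 ≤ p := hp.odd_iff.1 ((Nat.odd_pow_iff he).1 hodd)
  obtain ⟨s, hs⟩ := exists_orderOf_eq_of_dvd_natCard_sub_one (F := F) (n := p ^ e + 1)
    ⟨p ^ e - 1, by rw [hF, ← Nat.sq_sub_sq, one_pow]⟩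
  obtain ⟨hsum, hnorm⟩ :=
    hermitianCoord_pow_add_pow_eq_one (two_ne_zero_of_three_le_expChar hp3) hodd
      (hs ▸ pow_orderOf_eq_one s)
  refine ⟨hermitianCoord s, hermitianCoord (-s), hsum, hnorm, subring_eq_top_of_natCard_eq ?_, ?_⟩
  · rw [natCard_closure_singleton (p := p),
      minimalPeriod_frobenius_hermitianCoord_pow_two_mul_sub_one hp3 he h5 hs, hF, mul_comm,
      pow_mul]
  · rw [natCard_closure_singleton (p := p),
      minimalPeriod_frobenius_hermitianCoord_pow_add_one hp3 he hs]

theorem exists_hermitian_closure_of_even (hF : Nat.card F = q ^ 2) (heven : Even q) :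
    ∃ a b : F, a ^ (2 * q - 1) + b ^ (2 * q - 1) = 1 ∧
      a ^ (q + 1) + b ^ (q + 1) = 1 ∧
      Nat.card (Subring.closure ({a ^ (q + 1)} : Set F)) = q ∧
      Nat.card (Subring.closure ({a ^ (2 * q - 1)} : Set F)) = q := by
  obtain ⟨p, e, hp, _, he, rfl⟩ := exists_eq_prime_pow_of_natCard_eq_pow hF
  obtain rfl : p = 2 := hp.even_iff.1 (Nat.even_pow.1 heven).1
  have : Fact (Nat.Prime 2) := ⟨hp⟩
  obtain ⟨a, ha⟩ := exists_orderOf_eq_of_dvd_natCard_sub_one (F := F) (n := 2 ^ e - 1)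
    ⟨2 ^ e + 1, by rw [hF, mul_comm, ← Nat.sq_sub_sq, one_pow]⟩
  have hperiod := minimalPeriod_frobenius_of_orderOf_eq one_lt_two he ha
  have hperiod_sq : minimalPeriod (frobenius F 2) (a ^ 2) = e :=
    (minimalPeriod_apply ((frobenius_inj F 2).mem_periodicPts a)).trans hperiod
  have haq : a ^ 2 ^ e = 1 * a := by
    rw [one_mul, ← isPeriodicPt_frobenius_iff, isPeriodicPt_iff_minimalPeriod_dvd, hperiod]
  have hbq : (1 + a) ^ 2 ^ e = 1 * (1 + a) := by
    rw [add_pow_char_pow, haq, one_pow, one_mul, one_mul]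
  have hq : 2 ^ e ≠ 0 := pow_ne_zero e two_ne_zero
  have hpow {x : F} := pow_two_mul_sub_one_of_pow_eq_mul (a := x) (s := 1) hq
  refine ⟨a, 1 + a, ?_, ?_, ?_, ?_⟩
  · rw [hpow haq, hpow hbq]
    linear_combination a * CharTwo.two_eq_zero (R := F)
  · rw [pow_add_one_of_pow_eq_mul haq, pow_add_one_of_pow_eq_mul hbq]
    linear_combination (a ^ 2 + a) * CharTwo.two_eq_zero (R := F)
  · rw [pow_add_one_of_pow_eq_mul haq, one_mul, natCard_closure_singleton (p := 2), hperiod_sq]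
  · rw [hpow haq, one_pow, one_mul, natCard_closure_singleton (p := 2), hperiod]

end Existence

theorem unitary_field_lemma_general {F : Type*} [Field F] [Finite F] {q : ℕ}
    (hF : Nat.card F = q ^ 2) :
    (Odd q → q ≠ 5 →
      ∃ a b : F, a ^ (2 * q - 1) + b ^ (2 * q - 1) = 1 ∧
        a ^ (q + 1) + b ^ (q + 1) = 1 ∧
        Subring.closure ({a ^ (2 * q - 1)} : Set F) = ⊤ ∧
        Nat.card (Subring.closure ({a ^ (q + 1)} : Set F)) = q) ∧
    (Even q →
      ∃ a b : F, a ^ (2 * q - 1) + b ^ (2 * q - 1) = 1 ∧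
        a ^ (q + 1) + b ^ (q + 1) = 1 ∧
        Nat.card (Subring.closure ({a ^ (q + 1)} : Set F)) = q ∧
        Nat.card (Subring.closure ({a ^ (2 * q - 1)} : Set F)) = q) :=
  ⟨exists_hermitian_closure_of_odd hF, exists_hermitian_closure_of_even hF⟩

/-- Let `q = p^e` and let `F` be a finite field with `|F| = q²`.
(1) If `q` is odd and `q ∉ {3, 5}`, there are `a, b ∈ F` with
`a^{2q-1} + b^{2q-1} = 1` and `a^{q+1} + b^{q+1} = 1` such that `a^{2q-1}` generates `F`
over the prime field and the prime-field subring generated by `a^{q+1}` has exactly `q`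
elements.
(2) If `q = 2^e` with `e ≥ 2`, there are such `a, b` for which the prime-field subrings
generated by `a^{q+1}` and by `a^{2q-1}` each have exactly `q` elements. -/
theorem unitary_field_lemma
    (p e : ℕ) (hp : p.Prime) (he : 1 ≤ e) (q : ℕ) (hq : q = p ^ e)
    (F : Type) [Field F] [Fintype F] (hF : Fintype.card F = q ^ 2) :
    (Odd q → q ≠ 3 → q ≠ 5 →
      ∃ a b : F, a ^ (2 * q - 1) + b ^ (2 * q - 1) = 1 ∧
        a ^ (q + 1) + b ^ (q + 1) = 1 ∧
        Subring.closure ({a ^ (2 * q - 1)} : Set F) = ⊤ ∧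
        Nat.card (Subring.closure ({a ^ (q + 1)} : Set F)) = q) ∧
    (p = 2 → 2 ≤ e →
      ∃ a b : F, a ^ (2 * q - 1) + b ^ (2 * q - 1) = 1 ∧
        a ^ (q + 1) + b ^ (q + 1) = 1 ∧
        Nat.card (Subring.closure ({a ^ (q + 1)} : Set F)) = q ∧
        Nat.card (Subring.closure ({a ^ (2 * q - 1)} : Set F)) = q) := by
  have h := unitary_field_lemma_general (Nat.card_eq_fintype_card.trans hF)
  refine ⟨fun hodd _ h5 ↦ h.1 hodd h5, fun hp2 _ ↦ h.2 ?_⟩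
  rw [hq, hp2, Nat.even_pow]
  exact ⟨even_two, by omega⟩
end

section
/- There is a constant C such that for every finite field F with |F| = q, each of the groups SL(2, F), PSL(2, F) (the quotient of SL(2, F) by its center), and PGL(2, F) (the quotient of GL(2, F) by its center) has a presentation with at most C generators and at most C relators whose length is at most C·(1 + log₂ q). -/
/-- `G` has a presentation with at most `g` generators, at most `r` relators, and
length (number of generators plus the total length of the reduced relator words) at
most `L`. -/
def HasBoundedPresentation (G : Type) [Group G] (g r : ℕ) (L : ℝ) : Prop :=
  ∃ (m : ℕ) (π : FreeGroup (Fin m) →* G) (R : Finset (FreeGroup (Fin m))),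
    m ≤ g ∧ Function.Surjective π ∧ R.card ≤ r ∧
    π.ker = Subgroup.normalClosure (R : Set (FreeGroup (Fin m))) ∧
    ((m + ∑ w ∈ R, FreeGroup.norm w : ℕ) : ℝ) ≤ L

/-!
Take a unipotent `u`, a Weyl element `w` and diagonal elements `a`, `b`, `d`, `h` with parameters
`s`, `r`, `e`, `z` such that `r² = 1 + s²`, `e² = B` is `3` or `4`, the field is generated by `s²`
and its multiplicative group by `z`. By Baumslag's trick, `[a, b] = [u, uᵃ] = 1` and `uᵇ = u uᵃ`
already force all conjugates of `u` by powers of `a` to commute, so they generate a cyclic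
`ℤ[X]`-module in which `uᵖ = 1` and the minimal polynomial of `s²` leave only the additive group
of `F`. As `d` raises `u` to the power `B`, Horner's scheme in base `B` spells `uⁿ` with `O(log n)`
letters, and Horner's scheme in `a` spells every root element with `O(log q)` letters.

Since `Fˣ` is cyclic, the action of the single element `h` on the root elements, together with
`w h w⁻¹ = h⁻¹` and the Weyl words at `1` and at the four parameters, yields all of Steinberg's
relations, and the Bruhat normal form shows that these define `SL(2, F)`. Killing the central
element `w²` presents `PSL(2, F)`, and `PGL(2, F)` is either isomorphic to it or an extension of it
by a cyclic group of order two generated by a diagonal matrix. The finitely many fields too small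
for a suitable choice of `s` are covered by multiplication tables.
-/

/-! ## Presentations by families of generators and relators -/

/-- The family `x` of elements of `G` is a generating family, and the words `rel` in the letters of
that family are defining relators. Relators form a family rather than a set so that the relators of
a group built from `G` are indexed by a type built from `ι`. -/
structure IsPresentation {α ι G : Type*} [Group G] (x : α → G) (rel : ι → FreeGroup α) :
    Prop where
  surjective : Function.Surjective (FreeGroup.lift x)
  ker_eq : (FreeGroup.lift x).ker = Subgroup.normalClosure (Set.range rel)

/-- The relators `g * k = gk` that make up the multiplication table of `G`. -/
def multiplicationTableRel (G : Type*) [Mul G] (p : G × G) : FreeGroup G :=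
  FreeGroup.of p.1 * FreeGroup.of p.2 * (FreeGroup.of (p.1 * p.2))⁻¹

theorem freeGroup_lift_comp {α G H : Type*} [Group G] [Group H] (f : G →* H) (x : α → G) :
    FreeGroup.lift (f ∘ x) = f.comp (FreeGroup.lift x) := by
  ext
  simp

theorem freeGroup_lift_comp_of {α G : Type*} [Group G] (f : α → G) :
    FreeGroup.lift f ∘ FreeGroup.of = f :=
  FreeGroup.lift.symm_apply_apply f

namespace IsPresentation

variable {α ι G H : Type*} [Group G] [Group H] {x : α → G} {rel : ι → FreeGroup α}

theorem of_toGroup_injective (hx : Subgroup.closure (Set.range x) = ⊤)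
    (hrel : ∀ i, FreeGroup.lift x (rel i) = 1)
    (hinj : Function.Injective (PresentedGroup.toGroup (Set.forall_mem_range.2 hrel))) :
    IsPresentation x rel where
  surjective := by rw [← MonoidHom.range_eq_top, FreeGroup.range_lift_eq_closure, hx]
  ker_eq := by
    refine le_antisymm (fun y hy => PresentedGroup.mk_eq_one_iff.1 (hinj ?_))
      (PresentedGroup.closure_rels_subset_ker (Set.forall_mem_range.2 hrel))
    rw [map_one]
    exact hy

theorem lift_rel (h : IsPresentation x rel) (i : ι) : FreeGroup.lift x (rel i) = 1 := by
  rw [← MonoidHom.mem_ker, h.ker_eq]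
  exact Subgroup.subset_normalClosure ⟨i, rfl⟩

theorem exists_monoidHom (h : IsPresentation x rel) (π : FreeGroup α →* H)
    (hπ : ∀ i, π (rel i) = 1) : ∃ φ : G →* H, ∀ w, φ (FreeGroup.lift x w) = π w := by
  have hker : (FreeGroup.lift x).ker ≤ π.ker := by
    rw [h.ker_eq]
    exact Subgroup.normalClosure_le_normal (Set.range_subset_iff.2 hπ)
  exact ⟨(FreeGroup.lift x).liftOfSurjective h.surjective ⟨π, hker⟩,
    (FreeGroup.lift x).liftOfRightInverse_comp_apply _ _ ⟨π, hker⟩⟩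

theorem multiplicationTable (G : Type*) [Group G] :
    IsPresentation (id : G → G) (multiplicationTableRel G) := by
  have hrel : ∀ p, FreeGroup.lift id (multiplicationTableRel G p) = 1 := by
    simp [multiplicationTableRel]
  refine .of_toGroup_injective (by simp) hrel ?_
  let ofHom : G →* PresentedGroup (Set.range (multiplicationTableRel G)) :=
    .mk' PresentedGroup.of fun g k =>
      (PresentedGroup.mk_eq_mk_of_mul_inv_mem (Set.mem_range_self (g, k))).symm
  have hleft : ofHom.comp (PresentedGroup.toGroup (Set.forall_mem_range.2 hrel)) =
      MonoidHom.id _ := PresentedGroup.ext fun g => by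
    rw [MonoidHom.comp_apply, PresentedGroup.toGroup.of]
    rfl
  exact Function.LeftInverse.injective (g := ofHom) (DFunLike.congr_fun hleft)

theorem quotient (h : IsPresentation x rel) {f : G →* H} (hf : Function.Surjective f)
    (w : FreeGroup α) (hw : f.ker = Subgroup.normalClosure {FreeGroup.lift x w}) :
    IsPresentation (f ∘ x) (fun o : Option ι => o.elim w rel) := by
  have hrange : Set.range (fun o : Option ι => o.elim w rel) = {w} ∪ Set.range rel := by
    ext; simp [Option.exists, eq_comm]
  refine ⟨?_, ?_⟩
  · rw [freeGroup_lift_comp]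
    exact hf.comp h.surjective
  · rw [freeGroup_lift_comp, ← MonoidHom.comap_ker, hw, ← Set.image_singleton,
      ← Subgroup.map_normalClosure _ _ h.surjective, Subgroup.comap_map_eq, h.ker_eq, hrange,
      Subgroup.normalClosure_union]

end IsPresentation

theorem mem_normalizer_of_conj_mem_of_pow_mem {G : Type*} [Group G] {H : Subgroup G} {g : G}
    {n : ℕ} (hn : n ≠ 0) (hconj : ∀ k ∈ H, g * k * g⁻¹ ∈ H) (hpow : g ^ n ∈ H) :
    g ∈ Subgroup.normalizer (H : Set G) := by
  have hconj_pow (m : ℕ) : ∀ k ∈ H, g ^ m * k * (g ^ m)⁻¹ ∈ H := by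
    induction m with
    | zero => simp
    | succ m ih => exact fun k hk => by simpa [pow_succ', mul_assoc] using hconj _ (ih k hk)
  obtain ⟨m, rfl⟩ := Nat.exists_eq_succ_of_ne_zero hn
  refine Subgroup.mem_normalizer_iff.2 fun k => ⟨hconj k, fun hk => ?_⟩
  have hmem := H.mul_mem (H.mul_mem (H.inv_mem hpow) (hconj_pow m _ hk)) hpow
  rw [Nat.succ_eq_add_one, pow_succ] at hmem
  convert hmem using 1
  group

/-- The relators presenting a group generated by a subgroup with relators `rel` and one more element
`δ`, the letter `none`: those of the subgroup, `δ ^ n = v`, and `δ * a * δ⁻¹ = c a` for each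
generator `a` of the subgroup. -/
def cyclicExtensionRel {α ι : Type*} (rel : ι → FreeGroup α) (n : ℕ) (v : FreeGroup α)
    (c : α → FreeGroup α) : ι ⊕ Option α → FreeGroup (Option α)
  | .inl i => FreeGroup.map some (rel i)
  | .inr none => FreeGroup.of none ^ n * (FreeGroup.map some v)⁻¹
  | .inr (some a) => FreeGroup.of none * FreeGroup.of (some a) * (FreeGroup.of none)⁻¹ *
      (FreeGroup.map some (c a))⁻¹

namespace IsPresentation

variable {α ι G H : Type*} [Group G] [Group H] {x : α → G} {rel : ι → FreeGroup α}

theorem closure_range (h : IsPresentation x rel) : Subgroup.closure (Set.range x) = ⊤ := by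
  rw [← FreeGroup.range_lift_eq_closure, MonoidHom.range_eq_top.2 h.surjective]

theorem exists_eq_mul_zpow (h : IsPresentation x rel) {φ : G →* H} {γ : H} {n : ℕ} (hn : n ≠ 0)
    (hpow : γ ^ n ∈ φ.range) (hconj : ∀ a, γ * φ (x a) * γ⁻¹ ∈ φ.range)
    (hgen : φ.range ⊔ Subgroup.zpowers γ = ⊤) (y : H) : ∃ g : G, ∃ k : ℤ, φ g * γ ^ k = y := by
  have hconj' : ∀ k ∈ φ.range, γ * k * γ⁻¹ ∈ φ.range := by
    have : (⊤ : Subgroup G) ≤ φ.range.comap ((MulAut.conj γ).toMonoidHom.comp φ) := by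
      rw [← h.closure_range, Subgroup.closure_le]
      exact Set.range_subset_iff.2 hconj
    rintro _ ⟨g, rfl⟩
    exact this (Subgroup.mem_top g)
  have : φ.range.Normal := by
    rw [← Subgroup.normalizer_eq_top_iff, eq_top_iff, ← hgen, sup_le_iff, Subgroup.zpowers_le]
    exact ⟨Subgroup.le_normalizer, mem_normalizer_of_conj_mem_of_pow_mem hn hconj' hpow⟩
  obtain ⟨_, ⟨g, rfl⟩, _, ⟨k, rfl⟩, hy⟩ :=
    Subgroup.mem_sup_of_normal_left.1 (hgen.symm ▸ Subgroup.mem_top y)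
  exact ⟨g, k, hy⟩

theorem exists_monoidHom_of_cyclicExtensionRel (h : IsPresentation x rel) {n : ℕ} (hn : n ≠ 0)
    {v : FreeGroup α} {c : α → FreeGroup α} {q : FreeGroup (Option α) →* H}
    (hq : Function.Surjective q) (hrel : ∀ i, q (cyclicExtensionRel rel n v c i) = 1) :
    ∃ φ : G →* H, (∀ w, φ (FreeGroup.lift x w) = q (w.map some)) ∧
      ∀ y, ∃ g : G, ∃ k : ℤ, φ g * q (.of none) ^ k = y := by
  obtain ⟨φ, hφ⟩ := h.exists_monoidHom (q.comp (FreeGroup.map some)) fun i => hrel (.inl i)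
  have hφx (a : α) : φ (x a) = q (.of (some a)) := by simpa using hφ (.of a)
  refine ⟨φ, hφ, h.exists_eq_mul_zpow hn ⟨FreeGroup.lift x v, ?_⟩
    (fun a => ⟨FreeGroup.lift x (c a), ?_⟩) ?_⟩
  · rw [hφ, ← map_pow, eq_comm, ← mul_inv_eq_one]
    simpa [cyclicExtensionRel] using hrel (.inr none)
  · rw [hφ, hφx, eq_comm, ← mul_inv_eq_one]
    simpa [cyclicExtensionRel] using hrel (.inr (some a))
  · rw [eq_top_iff, ← MonoidHom.range_eq_top.2 hq, MonoidHom.range_eq_map,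
      ← FreeGroup.closure_range_of, MonoidHom.map_closure, Subgroup.closure_le]
    rintro _ ⟨_, ⟨_ | a, rfl⟩, rfl⟩
    · exact Subgroup.mem_sup_right (Subgroup.mem_zpowers _)
    · exact Subgroup.mem_sup_left ⟨x a, hφx a⟩

theorem lift_elim_map_some (f : G →* H) (δ : H) (w : FreeGroup α) :
    FreeGroup.lift (fun o : Option α => o.elim δ (f ∘ x)) (w.map some) =
      f (FreeGroup.lift x w) := by
  have : (FreeGroup.lift (fun o : Option α => o.elim δ (f ∘ x))).comp (FreeGroup.map some) =
      f.comp (FreeGroup.lift x) := by ext; simp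
  exact DFunLike.congr_fun this w

theorem lift_cyclicExtensionRel (h : IsPresentation x rel) {f : G →* H} {δ : H} {n : ℕ}
    {v : FreeGroup α} {c : α → FreeGroup α} (hv : δ ^ n = f (FreeGroup.lift x v))
    (hc : ∀ a, δ * f (x a) * δ⁻¹ = f (FreeGroup.lift x (c a))) (i : ι ⊕ Option α) :
    FreeGroup.lift (fun o : Option α => o.elim δ (f ∘ x)) (cyclicExtensionRel rel n v c i) =
      1 := by
  rcases i with i | _ | a
  · simp [cyclicExtensionRel, lift_elim_map_some, h.lift_rel]
  · simp [cyclicExtensionRel, lift_elim_map_some, ← hv]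
  · simp [cyclicExtensionRel, lift_elim_map_some, ← hc]

theorem closure_range_elim (h : IsPresentation x rel) {f : G →* H} {δ : H}
    (hgen : f.range ⊔ Subgroup.zpowers δ = ⊤) :
    Subgroup.closure (Set.range fun o : Option α => o.elim δ (f ∘ x)) = ⊤ := by
  rw [eq_top_iff, ← hgen, sup_le_iff, Subgroup.zpowers_le, MonoidHom.range_eq_map,
    ← h.closure_range, MonoidHom.map_closure, ← Set.range_comp]
  exact ⟨Subgroup.closure_mono (Set.range_comp_subset_range some fun o => o.elim δ (f ∘ x)),
    Subgroup.subset_closure ⟨none, rfl⟩⟩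

theorem cyclicExtension (h : IsPresentation x rel) {f : G →* H} (hf : Function.Injective f)
    {δ : H} {n : ℕ} (hn : n ≠ 0) {v : FreeGroup α} {c : α → FreeGroup α}
    (hv : δ ^ n = f (FreeGroup.lift x v))
    (hc : ∀ a, δ * f (x a) * δ⁻¹ = f (FreeGroup.lift x (c a)))
    (hgen : f.range ⊔ Subgroup.zpowers δ = ⊤)
    (hdvd : ∀ k : ℤ, δ ^ k ∈ f.range → (n : ℤ) ∣ k) :
    IsPresentation (fun o : Option α => o.elim δ (f ∘ x)) (cyclicExtensionRel rel n v c) := by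
  have hrel := h.lift_cyclicExtensionRel hv hc
  refine .of_toGroup_injective (h.closure_range_elim hgen) hrel
    ((injective_iff_map_eq_one _).2 fun e he => ?_)
  set π := PresentedGroup.toGroup (Set.forall_mem_range.2 hrel)
  set q := PresentedGroup.mk (Set.range (cyclicExtensionRel rel n v c))
  have hq (i) : q (cyclicExtensionRel rel n v c i) = 1 := PresentedGroup.one_of_mem ⟨i, rfl⟩
  obtain ⟨φ, hφ, hcover⟩ := h.exists_monoidHom_of_cyclicExtensionRel hn
    (PresentedGroup.mk_surjective _) hq
  have hπφ (g : G) : π (φ g) = f g := by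
    obtain ⟨w, rfl⟩ := h.surjective g
    rw [hφ, ← lift_elim_map_some f δ]
    rfl
  have hπδ : π (q (.of none)) = δ := PresentedGroup.toGroup.of _
  obtain ⟨g, k, rfl⟩ := hcover e
  rw [map_mul, map_zpow, hπφ, hπδ] at he
  -- `δ ^ k` lies in the image of `f`, so `k` is a multiple of `n` and `e` lies in that of `φ`.
  obtain ⟨m, rfl⟩ := hdvd k ⟨g⁻¹, by rw [map_inv, inv_eq_of_mul_eq_one_right he]⟩
  have hpow : q (.of none) ^ n = φ (FreeGroup.lift x v) := by
    rw [hφ, ← map_pow, ← mul_inv_eq_one]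
    simpa [cyclicExtensionRel] using hq (.inr none)
  rw [zpow_mul, zpow_natCast, hv, ← map_zpow, ← map_mul, map_eq_one_iff f hf] at he
  rw [zpow_mul, zpow_natCast, hpow, ← map_zpow, ← map_mul, he, map_one]

end IsPresentation

/-! ## Lengths of words -/

section Norm

variable {α β : Type*} [DecidableEq α] [DecidableEq β]

theorem freeGroup_norm_map_le (f : α → β) (w : FreeGroup α) : (w.map f).norm ≤ w.norm := by
  conv_lhs => rw [← FreeGroup.mk_toWord (x := w), FreeGroup.map.mk]
  exact FreeGroup.norm_mk_le.trans (List.length_map _).le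

theorem freeGroup_norm_mul_le_add {v w : FreeGroup α} {m n : ℕ} (hv : v.norm ≤ m)
    (hw : w.norm ≤ n) : (v * w).norm ≤ m + n :=
  (FreeGroup.norm_mul_le v w).trans (add_le_add hv hw)

theorem norm_cyclicExtensionRel_le {ι : Type*} {rel : ι → FreeGroup α} {n : ℕ}
    {v : FreeGroup α} {c : α → FreeGroup α} {M : ℕ} (hrel : ∀ i, (rel i).norm ≤ M)
    (hv : n + v.norm ≤ M) (hc : ∀ a, 3 + (c a).norm ≤ M) (i : ι ⊕ Option α) :
    (cyclicExtensionRel rel n v c i).norm ≤ M := by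
  have hof (a : Option α) : (FreeGroup.of a).norm ≤ 1 := (FreeGroup.norm_of a).le
  have hmap (w : FreeGroup α) : ((w.map some)⁻¹).norm ≤ w.norm :=
    FreeGroup.norm_inv_eq.trans_le (freeGroup_norm_map_le some w)
  rcases i with i | _ | a
  · exact (freeGroup_norm_map_le some _).trans (hrel i)
  · exact (freeGroup_norm_mul_le_add (FreeGroup.norm_of_pow _ _).le (hmap v)).trans hv
  · exact (freeGroup_norm_mul_le_add (freeGroup_norm_mul_le_add (freeGroup_norm_mul_le_add
      (hof _) (hof _)) (FreeGroup.norm_inv_eq.trans_le (hof _))) (hmap _)).trans (hc a)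

end Norm

theorem IsPresentation.hasBoundedPresentation {α ι G : Type} [Group G] [Fintype α]
    [DecidableEq α] [Fintype ι] {x : α → G} {rel : ι → FreeGroup α} (h : IsPresentation x rel)
    {M : ℕ} (hM : ∀ i, (rel i).norm ≤ M) :
    HasBoundedPresentation G (Fintype.card α) (Fintype.card ι)
      (Fintype.card α + Fintype.card ι * M : ℕ) := by
  let e := FreeGroup.freeGroupCongr (Fintype.equivFin α)
  refine ⟨Fintype.card α, (FreeGroup.lift x).comp e.symm, Finset.univ.image (e ∘ rel), le_rfl,
    h.surjective.comp e.symm.surjective, Finset.card_image_le, ?_, ?_⟩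
  · rw [MonoidHom.ker_comp_mulEquiv, h.ker_eq, Finset.coe_image, Finset.coe_univ, Set.image_univ,
      Set.range_comp]
    exact Subgroup.map_normalClosure _ _ e.surjective
  · have hnorm : ∀ w ∈ Finset.univ.image (e ∘ rel), w.norm ≤ M := by
      refine Finset.forall_mem_image.2 fun i _ => ?_
      exact (freeGroup_norm_map_le (Fintype.equivFin α) (rel i)).trans (hM i)
    have hsum := Finset.sum_le_card_nsmul _ _ _ hnorm
    have hcard : (Finset.univ.image (e ∘ rel)).card ≤ Fintype.card ι := Finset.card_image_le
    exact_mod_cast Nat.add_le_add_left (hsum.trans (Nat.mul_le_mul_right M hcard)) _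

namespace HasBoundedPresentation

variable {G H : Type} [Group G] [Group H] {g g' r r' : ℕ} {L L' : ℝ}

theorem mono (h : HasBoundedPresentation G g r L) (hg : g ≤ g') (hr : r ≤ r') (hL : L ≤ L') :
    HasBoundedPresentation G g' r' L' := by
  obtain ⟨m, π, R, hm, hπ, hR, hker, hlen⟩ := h
  exact ⟨m, π, R, hm.trans hg, hπ, hR.trans hr, hker, hlen.trans hL⟩

theorem congr (h : HasBoundedPresentation G g r L) (e : G ≃* H) :
    HasBoundedPresentation H g r L := by
  obtain ⟨m, π, R, hm, hπ, hR, hker, hlen⟩ := h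
  exact ⟨m, (e : G →* H).comp π, R, hm, e.surjective.comp hπ, hR,
    (MonoidHom.ker_mulEquiv_comp _ _).trans hker, hlen⟩

theorem of_natCard_le (G : Type) [Group G] [Finite G] {N : ℕ} (hN : Nat.card G ≤ N) :
    HasBoundedPresentation G N (N ^ 2) (N + N ^ 2 * 3 : ℕ) := by
  classical
  have := Fintype.ofFinite G
  rw [Nat.card_eq_fintype_card] at hN
  have hnorm (p : G × G) : (multiplicationTableRel G p).norm ≤ 3 :=
    freeGroup_norm_mul_le_add (freeGroup_norm_mul_le_add (FreeGroup.norm_of _).le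
      (FreeGroup.norm_of _).le) (FreeGroup.norm_inv_eq.trans_le (FreeGroup.norm_of _).le)
  refine ((IsPresentation.multiplicationTable G).hasBoundedPresentation hnorm).mono hN ?_ ?_
  · rw [Fintype.card_prod, ← sq]
    gcongr
  · rw [Fintype.card_prod, ← sq]
    gcongr

end HasBoundedPresentation

/-! ## Horner's scheme in groups -/

section Horner

variable {G H : Type*} [Group G] [Group H]

/-- Horner's scheme for the word `y c₀ * (d * y c₁ * d⁻¹) * (d ^ 2 * y c₂ * d⁻²) * ⋯`, which spells
`∏ dⁱ yᵢ d⁻ⁱ` with only two letters `d` per factor. -/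
def hornerWord (y : ℕ → G) (d : G) : List ℕ → G
  | [] => 1
  | c :: l => y c * (d * hornerWord y d l * d⁻¹)

theorem map_hornerWord (f : G →* H) (y : ℕ → G) (d : G) (l : List ℕ) :
    f (hornerWord y d l) = hornerWord (f ∘ y) (f d) l := by
  induction l with
  | nil => simp [hornerWord]
  | cons c l ih => simp [hornerWord, ih]

theorem hornerWord_pow_eq {u d : G} {B : ℕ} (hd : d * u * d⁻¹ = u ^ B) (l : List ℕ) :
    hornerWord (u ^ ·) d l = u ^ Nat.ofDigits B l := by
  induction l with
  | nil => simp [hornerWord]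
  | cons c l ih =>
    rw [hornerWord, ih, ← conj_pow, hd, ← pow_mul, ← pow_add, Nat.ofDigits_cons]

theorem norm_hornerWord_le {α : Type*} [DecidableEq α] {y : ℕ → FreeGroup α} {d : FreeGroup α}
    (hd : d.norm ≤ 1) {m : ℕ} {l : List ℕ} (hy : ∀ c ∈ l, (y c).norm ≤ m) :
    (hornerWord y d l).norm ≤ l.length * (m + 2) := by
  induction l with
  | nil => simp [hornerWord]
  | cons c l ih =>
    rw [List.forall_mem_cons] at hy
    have hd' : (d⁻¹).norm ≤ 1 := FreeGroup.norm_inv_eq.trans_le hd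
    refine (freeGroup_norm_mul_le_add hy.1 (freeGroup_norm_mul_le_add
      (freeGroup_norm_mul_le_add hd (ih hy.2)) hd')).trans ?_
    rw [List.length_cons]
    linarith

/-- The power `u ^ n`, spelled with the digits of `n` in base `B`, where `d` stands for an element
raising `u` to the power `B` by conjugation. -/
def natWord (B : ℕ) (u d : G) (n : ℕ) : G :=
  hornerWord (u ^ ·) d (B.digits n)

/-- The product of the conjugates `aⁱ * u ^ cᵢ * a⁻ⁱ` for `l = [c₀, c₁, …]`. -/
def polyWord (B : ℕ) (u d a : G) (l : List ℕ) : G :=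
  hornerWord (natWord B u d) a l

theorem map_natWord (f : G →* H) (B : ℕ) (u d : G) (n : ℕ) :
    f (natWord B u d n) = natWord B (f u) (f d) n := by
  simp [natWord, map_hornerWord, Function.comp_def]

theorem map_polyWord (f : G →* H) (B : ℕ) (u d a : G) (l : List ℕ) :
    f (polyWord B u d a l) = polyWord B (f u) (f d) (f a) l := by
  simp [polyWord, map_hornerWord, Function.comp_def, map_natWord]

theorem natWord_eq_pow {u d : G} {B : ℕ} (hd : d * u * d⁻¹ = u ^ B) (n : ℕ) :
    natWord B u d n = u ^ n := by
  rw [natWord, hornerWord_pow_eq hd, Nat.ofDigits_digits]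

end Horner

/-! ## Conjugates of a unipotent element -/

section Conjugates

open Polynomial

variable {G : Type*} [Group G]

theorem conj_mul_conj_comm {t a : G} (h : Commute t a) (g : G) :
    t * (a * g * a⁻¹) * t⁻¹ = a * (t * g * t⁻¹) * a⁻¹ := by
  calc t * (a * g * a⁻¹) * t⁻¹ = t * a * g * (t * a)⁻¹ := by group
    _ = a * t * g * (a * t)⁻¹ := by rw [h.eq]
    _ = a * (t * g * t⁻¹) * a⁻¹ := by group

theorem conj_pow_mul_conj_pow (u a : G) (i k : ℕ) :
    a ^ k * (a ^ i * u * (a ^ i)⁻¹) * (a ^ k)⁻¹ = a ^ (k + i) * u * (a ^ (k + i))⁻¹ := by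
  rw [pow_add, mul_inv_rev]
  simp only [mul_assoc]

/-- Baumslag's trick: conjugating `[u, uᵃ⁽ⁿ⁺¹⁾] = 1` by `b` expands, thanks to `uᵇ = u * uᵃ`, into a
relation whose only new commutator is `[u, uᵃ⁽ⁿ⁺²⁾]`. -/
theorem commute_conj_pow_of_conj_eq_mul_conj {u a b : G} (hab : Commute b a)
    (hu : Commute u (a * u * a⁻¹)) (hb : b * u * b⁻¹ = u * (a * u * a⁻¹)) (n : ℕ) :
    Commute u (a ^ n * u * (a ^ n)⁻¹) := by
  set x : ℕ → G := fun i => a ^ i * u * (a ^ i)⁻¹ with hx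
  have hx0 : x 0 = u := by simp [hx]
  have hshift (i k : ℕ) (h : Commute (x 0) (x i)) : Commute (x k) (x (k + i)) := by
    simpa [hx, conj_pow_mul_conj_pow] using (Commute.conj_iff (a ^ k)).2 h
  have hbx (i : ℕ) : b * x i * b⁻¹ = x i * x (i + 1) := by
    rw [conj_mul_conj_comm (hab.pow_right i), hb]
    simp only [hx, pow_succ]
    group
  suffices h : Commute (x 0) (x n) ∧ Commute (x 0) (x (n + 1)) by simpa [hx0] using h.1
  induction n with
  | zero => exact ⟨Commute.refl _, by simpa [hx] using hu⟩
  | succ n ih =>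
    refine ⟨ih.2, ?_⟩
    have h₁ : Commute (x 1) (x (n + 1)) := by simpa [add_comm] using hshift n 1 ih.1
    have h₂ : Commute (x 1) (x (n + 2)) := by
      simpa [add_comm, add_left_comm] using hshift (n + 1) 1 ih.2
    have h₃ : Commute (x 0 * x 1) (x (n + 1) * x (n + 2)) := by
      simpa only [hbx] using (Commute.conj_iff b).2 ih.2
    have h₄ : Commute (x 0) (x (n + 1) * x (n + 2)) := by
      simpa using h₃.mul_left (h₁.mul_right h₂).inv_left
    simpa using ih.2.inv_right.mul_right h₄

theorem commute_conj_pow_conj_pow {u a b : G} (hab : Commute b a)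
    (hu : Commute u (a * u * a⁻¹)) (hb : b * u * b⁻¹ = u * (a * u * a⁻¹)) (i j : ℕ) :
    Commute (a ^ i * u * (a ^ i)⁻¹) (a ^ j * u * (a ^ j)⁻¹) := by
  wlog h : i ≤ j generalizing i j
  · exact (this j i (le_of_not_ge h)).symm
  obtain ⟨k, rfl⟩ := Nat.exists_eq_add_of_le h
  rw [← conj_pow_mul_conj_pow]
  exact (Commute.conj_iff (a ^ i)).2 (commute_conj_pow_of_conj_eq_mul_conj hab hu hb k)

theorem exists_intPolynomial_addMonoidHom {u a : G}
    (hcomm : ∀ i j : ℕ, Commute (a ^ i * u * (a ^ i)⁻¹) (a ^ j * u * (a ^ j)⁻¹)) :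
    ∃ φ : ℤ[X] →+ Additive G, (φ 1).toMul = u ∧
      ∀ P, (φ (X * P)).toMul = a * (φ P).toMul * a⁻¹ := by
  set V := Subgroup.closure (Set.range fun i : ℕ => a ^ i * u * (a ^ i)⁻¹)
  have : IsMulCommutative V := Subgroup.isMulCommutative_closure <| by
    rintro _ ⟨i, rfl⟩ _ ⟨j, rfl⟩
    exact hcomm i j
  have huV : u ∈ V := Subgroup.subset_closure ⟨0, by simp⟩
  have hconj : V ≤ V.comap (MulAut.conj a).toMonoidHom := by
    rw [Subgroup.closure_le]
    rintro _ ⟨i, rfl⟩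
    exact Subgroup.subset_closure ⟨1 + i, by simp [← conj_pow_mul_conj_pow]⟩
  open scoped IsMulCommutative in
  let A : AddMonoid.End (Additive V) := MonoidHom.toAdditive
    (((MulAut.conj a).toMonoidHom.comp V.subtype).codRestrict V fun g => hconj g.2)
  let φ : ℤ[X] →+ Additive V := (AddMonoidHom.eval (Additive.ofMul ⟨u, huV⟩)).comp
    (aeval (R := ℤ) A).toRingHom.toAddMonoidHom
  have hφ (P : ℤ[X]) : φ P = aeval A P (.ofMul ⟨u, huV⟩) := rfl
  refine ⟨(MonoidHom.toAdditive V.subtype).comp φ, ?_, fun P => ?_⟩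
  · simp [hφ]
  · rw [AddMonoidHom.comp_apply, AddMonoidHom.comp_apply, hφ, hφ, map_mul, aeval_X]
    rfl

theorem intPolynomial_addHom_ext {M : Type*} [AddGroup M] {f g : ℤ[X] →+ M} (h₁ : f 1 = g 1)
    (hX : ∀ P, f P = g P → f (X * P) = g (X * P)) : f = g := by
  have hpow (n : ℕ) : f (X ^ n) = g (X ^ n) := by
    induction n with
    | zero => simpa using h₁
    | succ n ih => rw [pow_succ']; exact hX _ ih
  refine Polynomial.addHom_ext' fun n => AddMonoidHom.ext_int ?_
  simpa [X_pow_eq_monomial] using hpow n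

variable {u a : G} {φ : ℤ[X] →+ Additive G}

theorem intPolynomial_addHom_mul_eq_zero (hX : ∀ P, (φ (X * P)).toMul = a * (φ P).toMul * a⁻¹)
    {P : ℤ[X]} (hP : φ P = 0) (Q : ℤ[X]) : φ (Q * P) = 0 := by
  have : φ.comp (AddMonoidHom.mulRight P) = 0 := by
    refine intPolynomial_addHom_ext (by simp [hP]) fun Q hQ => ?_
    have hQ' : φ (Q * P) = 0 := hQ
    apply Additive.toMul.injective
    simp [mul_assoc, hX, hQ']
  exact DFunLike.congr_fun this Q

theorem conj_intPolynomial_addHom (h₁ : (φ 1).toMul = u)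
    (hX : ∀ P, (φ (X * P)).toMul = a * (φ P).toMul * a⁻¹) {t : G} (hta : Commute t a) {Q : ℤ[X]}
    (htu : t * u * t⁻¹ = (φ Q).toMul) (P : ℤ[X]) :
    t * (φ P).toMul * t⁻¹ = (φ (Q * P)).toMul := by
  have : (MonoidHom.toAdditive (MulAut.conj t).toMonoidHom).comp φ =
      φ.comp (AddMonoidHom.mulLeft Q) := by
    refine intPolynomial_addHom_ext ?_ fun P hP => ?_
    · simpa [h₁] using congrArg Additive.ofMul htu
    · have hP' : t * (φ P).toMul * t⁻¹ = (φ (Q * P)).toMul := congrArg Additive.toMul hP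
      apply Additive.toMul.injective
      calc t * (φ (X * P)).toMul * t⁻¹ = a * (φ (Q * P)).toMul * a⁻¹ := by
            rw [hX, conj_mul_conj_comm hta, hP']
        _ = (φ (Q * (X * P))).toMul := by rw [← hX, mul_left_comm]
  exact congrArg Additive.toMul (DFunLike.congr_fun this P)

theorem map_natOfDigits {R S : Type*} [Semiring R] [Semiring S] (f : R →+* S) (b : R)
    (l : List ℕ) : f (Nat.ofDigits b l) = Nat.ofDigits (f b) l := by
  induction l with
  | nil => simp [Nat.ofDigits]
  | cons c l ih => simp [Nat.ofDigits, ih]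

theorem polyWord_eq_intPolynomial_addHom (h₁ : (φ 1).toMul = u)
    (hX : ∀ P, (φ (X * P)).toMul = a * (φ P).toMul * a⁻¹) {d : G} {B : ℕ}
    (hd : d * u * d⁻¹ = u ^ B) (l : List ℕ) :
    polyWord B u d a l = (φ (Nat.ofDigits X l)).toMul := by
  induction l with
  | nil => simp [polyWord, hornerWord, Nat.ofDigits]
  | cons c l ih =>
    rw [polyWord] at ih
    rw [polyWord, hornerWord, ih, natWord_eq_pow hd, ← hX, Nat.ofDigits, map_add, toMul_add,
      ← nsmul_one, map_nsmul, toMul_nsmul, h₁]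

/-- Conjugation by `a` makes the group generated by the conjugates of `u` by powers of `a` a cyclic
`ℤ[X]`-module, on which the generators of the kernel of `X ↦ σ` act trivially. -/
theorem exists_addMonoidHom_of_conj {R : Type*} [CommRing R] {σ : R}
    (hσ : Function.Surjective (aeval (R := ℤ) σ)) {f : List ℕ} {p : ℕ}
    (hker : RingHom.ker (aeval (R := ℤ) σ) = Ideal.span {Nat.ofDigits X f, (p : ℤ[X])})
    (hcomm : ∀ i j : ℕ, Commute (a ^ i * u * (a ^ i)⁻¹) (a ^ j * u * (a ^ j)⁻¹))
    {d : G} {B : ℕ} (hd : d * u * d⁻¹ = u ^ B) (hf : polyWord B u d a f = 1)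
    (hp : natWord B u d p = 1) :
    ∃ ψ : R →+ Additive G, (ψ 1).toMul = u ∧
      (∀ l, polyWord B u d a l = (ψ (Nat.ofDigits σ l)).toMul) ∧
      ∀ t z, Commute t a → t * u * t⁻¹ = (ψ z).toMul →
        ∀ x, t * (ψ x).toMul * t⁻¹ = (ψ (z * x)).toMul := by
  obtain ⟨φ, h₁, hX⟩ := exists_intPolynomial_addMonoidHom hcomm
  have hgen : ∀ P ∈ ({Nat.ofDigits X f, (p : ℤ[X])} : Set ℤ[X]), φ P = 0 := by
    rintro P (rfl | rfl) <;> apply Additive.toMul.injective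
    · rw [← polyWord_eq_intPolynomial_addHom h₁ hX hd, hf, toMul_zero]
    · rw [← nsmul_one, map_nsmul, toMul_nsmul, h₁, ← natWord_eq_pow hd, hp, toMul_zero]
  have hle : (aeval (R := ℤ) σ : ℤ[X] →+ R).ker ≤ φ.ker := fun P hP => by
    have hP' : P ∈ Ideal.span {Nat.ofDigits X f, (p : ℤ[X])} := hker ▸ hP
    obtain ⟨Q, R, rfl⟩ := Ideal.mem_span_pair.1 hP'
    rw [AddMonoidHom.mem_ker, map_add,
      intPolynomial_addHom_mul_eq_zero hX (hgen _ (by simp)),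
      intPolynomial_addHom_mul_eq_zero hX (hgen _ (by simp)), add_zero]
  let ψ := (aeval (R := ℤ) σ : ℤ[X] →+ R).liftOfSurjective hσ ⟨φ, hle⟩
  have hψ (P : ℤ[X]) : ψ (aeval σ P) = φ P :=
    AddMonoidHom.liftOfRightInverse_comp_apply _ _ _ ⟨φ, hle⟩ P
  refine ⟨ψ, by rw [← h₁, ← hψ, map_one (aeval σ)], fun l => ?_, fun t z hta htu x => ?_⟩
  · rw [polyWord_eq_intPolynomial_addHom h₁ hX hd, ← hψ]
    simpa using congrArg (fun x => (ψ x).toMul) (map_natOfDigits (aeval σ).toRingHom X l)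
  · obtain ⟨P, rfl⟩ := hσ x
    obtain ⟨Q, rfl⟩ := hσ z
    rw [← map_mul, hψ, hψ]
    exact conj_intPolynomial_addHom h₁ hX hta (by rwa [hψ] at htu) P

end Conjugates

/-! ## Steinberg systems of rank one -/

section Matrices

open Matrix MatrixGroups

variable {F : Type*} [Field F]

/-- The upper unipotent matrix `!![1, x; 0, 1]`, the standard root element of `SL(2, F)`. -/
def unipotentSL (x : F) : SL(2, F) := ⟨!![1, x; 0, 1], by simp⟩

/-- The diagonal matrix `!![t, 0; 0, t⁻¹]`, the standard torus element of `SL(2, F)`. -/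
def torusSL (t : Fˣ) : SL(2, F) := ⟨!![↑t, 0; 0, ↑t⁻¹], by simp⟩

/-- The matrix `!![0, 1; -1, 0]`, a representative of the nontrivial Weyl group element. -/
def weylSL : SL(2, F) := ⟨!![0, 1; -1, 0], by simp⟩

@[simp]
theorem coe_unipotentSL (x : F) : (unipotentSL x : Matrix (Fin 2) (Fin 2) F) = !![1, x; 0, 1] :=
  rfl

@[simp]
theorem coe_torusSL (t : Fˣ) : (torusSL t : Matrix (Fin 2) (Fin 2) F) = !![↑t, 0; 0, ↑t⁻¹] :=
  rfl

@[simp]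
theorem coe_weylSL : ((weylSL : SL(2, F)) : Matrix (Fin 2) (Fin 2) F) = !![0, 1; -1, 0] :=
  rfl

end Matrices

/-- The product of root elements `y x` and their conjugates that spells, in `SL(2, F)`, the monomial
matrix `torusSL x * weylSL`. -/
def weylWord {F G : Type*} [Field F] [Group G] (y : F → G) (w : G) (x : F) : G :=
  y x * w⁻¹ * y x⁻¹ * w * y x

/-- Steinberg's rank one relations over `F`: the elements `root x`, `torus t` and `weyl` of `G`
multiply like the matrices `unipotentSL x`, `torusSL t` and `weylSL`. -/
structure SteinbergSystem (F G : Type*) [Field F] [Group G] where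
  root : F → G
  torus : Fˣ →* G
  weyl : G
  root_add (x y : F) : root (x + y) = root x * root y
  torus_conj_root (t : Fˣ) (x : F) : torus t * root x * (torus t)⁻¹ = root (t ^ 2 * x)
  weyl_conj_torus (t : Fˣ) : weyl * torus t * weyl⁻¹ = (torus t)⁻¹
  weylWord_root (t : Fˣ) : weylWord root weyl t = torus t * weyl

namespace SteinbergSystem

section Bruhat

variable {F G : Type*} [Field F] [Group G] (S : SteinbergSystem F G)

theorem root_zero : S.root 0 = 1 := by
  simpa using S.root_add 0 0

theorem root_neg (x : F) : S.root (-x) = (S.root x)⁻¹ := by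
  rw [eq_inv_iff_mul_eq_one, ← S.root_add, neg_add_cancel, S.root_zero]

theorem torus_mul_root (t : Fˣ) (x : F) :
    S.torus t * S.root x = S.root (t ^ 2 * x) * S.torus t :=
  mul_inv_eq_iff_eq_mul.1 (S.torus_conj_root t x)

theorem torus_mul_weyl (t : Fˣ) : S.torus t * S.weyl = S.weyl * S.torus t⁻¹ := by
  have h := S.weyl_conj_torus t⁻¹
  rw [map_inv, inv_inv] at h
  rw [← h, map_inv]
  group

theorem weyl_inv_mul_root_mul_weyl (t : Fˣ) :
    S.weyl⁻¹ * S.root t * S.weyl =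
      S.root (-↑t⁻¹) * S.torus t⁻¹ * S.weyl * S.root (-↑t⁻¹) := by
  have h := S.weylWord_root t⁻¹
  rw [weylWord, Units.val_inv_eq_inv_val, inv_inv, ← Units.val_inv_eq_inv_val] at h
  rw [mul_assoc (S.root _), ← h, S.root_neg]
  group

theorem weyl_mul_weyl : S.weyl * S.weyl = S.torus (-1) := by
  have h₁ := S.weylWord_root 1
  have h₂ := S.weylWord_root (-1)
  simp only [weylWord, inv_neg, inv_one, Units.val_neg, Units.val_one, S.root_neg, map_one,
    one_mul] at h₁ h₂
  have h₃ : S.torus (-1) * S.weyl = S.weyl⁻¹ := by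
    rw [← h₂]
    conv_rhs => rw [← h₁]
    group
  have h₄ : S.torus (-1) * (S.weyl * S.weyl) = 1 := by
    rw [← mul_assoc, h₃, inv_mul_cancel]
  rw [eq_inv_of_mul_eq_one_right h₄, ← map_inv, inv_neg, inv_one]

/-- The union of the two Bruhat cells `U T` and `U w U T`, where `U` is the root subgroup and `T`
the torus. -/
def bruhatCells : Set G :=
  {g | ∃ x t, g = S.root x * S.torus t} ∪
    {g | ∃ x y t, g = S.root x * S.weyl * S.root y * S.torus t}

variable {S} {g : G}

theorem root_mul_mem_bruhatCells (hg : g ∈ S.bruhatCells) (z : F) :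
    S.root z * g ∈ S.bruhatCells := by
  rcases hg with ⟨x, t, rfl⟩ | ⟨x, y, t, rfl⟩
  · exact .inl ⟨z + x, t, by rw [S.root_add, mul_assoc]⟩
  · exact .inr ⟨z + x, y, t, by simp only [S.root_add, mul_assoc]⟩

theorem torus_mul_mem_bruhatCells (hg : g ∈ S.bruhatCells) (s : Fˣ) :
    S.torus s * g ∈ S.bruhatCells := by
  rcases hg with ⟨x, t, rfl⟩ | ⟨x, y, t, rfl⟩
  · exact .inl ⟨s ^ 2 * x, s * t, by rw [← mul_assoc, S.torus_mul_root, map_mul, mul_assoc]⟩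
  · refine .inr ⟨s ^ 2 * x, (↑s⁻¹ : F) ^ 2 * y, s⁻¹ * t, ?_⟩
    calc S.torus s * (S.root x * S.weyl * S.root y * S.torus t)
        = S.torus s * S.root x * S.weyl * S.root y * S.torus t := by simp only [mul_assoc]
      _ = S.root (s ^ 2 * x) * (S.torus s * S.weyl) * S.root y * S.torus t := by
          rw [S.torus_mul_root]; simp only [mul_assoc]
      _ = S.root (s ^ 2 * x) * S.weyl * (S.torus s⁻¹ * S.root y) * S.torus t := by
          rw [S.torus_mul_weyl]; simp only [mul_assoc]
      _ = _ := by rw [S.torus_mul_root, map_mul]; simp only [mul_assoc]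

theorem weyl_mul_mem_bruhatCells (hg : g ∈ S.bruhatCells) : S.weyl * g ∈ S.bruhatCells := by
  rcases hg with ⟨x, t, rfl⟩ | ⟨x, y, t, rfl⟩
  · exact .inr ⟨0, x, t, by simp [S.root_zero, mul_assoc]⟩
  obtain rfl | hx := eq_or_ne x 0
  · have h : S.weyl * (S.root 0 * S.weyl * S.root y * S.torus t) =
        S.torus (-1) * (S.root y * S.torus t) := by
      simp only [S.root_zero, ← S.weyl_mul_weyl, one_mul, mul_assoc]
    rw [h]
    exact torus_mul_mem_bruhatCells (.inl ⟨y, t, rfl⟩) _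
  lift x to Fˣ using hx.isUnit
  have h : S.weyl * (S.root x * S.weyl * S.root y * S.torus t) =
      S.torus (-1) * (S.root (-↑x⁻¹) * (S.torus x⁻¹ *
        (S.root 0 * S.weyl * S.root (-↑x⁻¹ + y) * S.torus t))) := by
    calc S.weyl * (S.root x * S.weyl * S.root y * S.torus t)
        = S.weyl * S.weyl * (S.weyl⁻¹ * S.root x * S.weyl) * S.root y * S.torus t := by group
      _ = _ := by
        rw [S.weyl_inv_mul_root_mul_weyl, S.weyl_mul_weyl, S.root_zero, S.root_add]
        simp only [one_mul, mul_assoc]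
  rw [h]
  exact torus_mul_mem_bruhatCells (root_mul_mem_bruhatCells
    (torus_mul_mem_bruhatCells (.inr ⟨0, _, t, rfl⟩) _) _) _

theorem mem_bruhatCells_of_closure_eq_top
    (hS : Subgroup.closure (insert S.weyl (Set.range S.root)) = ⊤) (g : G) :
    g ∈ S.bruhatCells := by
  have hg : g ∈ Subgroup.closure (insert S.weyl (Set.range S.root)) := hS ▸ Subgroup.mem_top g
  induction hg using Subgroup.closure_induction_left with
  | one => exact .inl ⟨0, 1, by simp [S.root_zero]⟩
  | mul_left s hs g _ hg =>
    obtain rfl | ⟨x, rfl⟩ := hs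
    exacts [weyl_mul_mem_bruhatCells hg, root_mul_mem_bruhatCells hg x]
  | inv_mul_cancel s hs g _ hg =>
    obtain rfl | ⟨x, rfl⟩ := hs
    · have h : S.weyl⁻¹ = S.torus (-1) * S.weyl := by
        rw [eq_comm, ← mul_eq_one_iff_eq_inv, mul_assoc, S.weyl_mul_weyl, ← map_mul]
        simp
      rw [h, mul_assoc]
      exact torus_mul_mem_bruhatCells (weyl_mul_mem_bruhatCells hg) _
    · rw [← S.root_neg]
      exact root_mul_mem_bruhatCells hg _

end Bruhat

section Cyclic

variable {F G : Type*} [Field F] [Group G] {ψ : F →+ Additive G} {w h : G} {z : Fˣ}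

theorem weylWord_sq_mul_of_conj (hψ : ∀ x, h * (ψ x).toMul * h⁻¹ = (ψ (z ^ 2 * x)).toMul)
    (hw : w * h * w⁻¹ = h⁻¹) (x : F) :
    weylWord (fun x => (ψ x).toMul) w (z ^ 2 * x) =
      h * weylWord (fun x => (ψ x).toMul) w x * h⁻¹ := by
  have hinv : (ψ (z ^ 2 * x)⁻¹).toMul = h⁻¹ * (ψ x⁻¹).toMul * h := by
    have hx : (z : F) ^ 2 * (z ^ 2 * x)⁻¹ = x⁻¹ := by
      rw [mul_inv, mul_inv_cancel_left₀ (pow_ne_zero 2 z.ne_zero)]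
    rw [← hx, ← hψ]
    group
  have hhw : h * w * h = w := by
    rw [mul_assoc, mul_inv_eq_iff_eq_mul.1 hw, mul_inv_cancel_left]
  have hhw' : h⁻¹ * w⁻¹ * h⁻¹ = w⁻¹ := by
    simpa [mul_assoc] using congrArg (·⁻¹) hhw
  simp only [weylWord]
  rw [← hψ, hinv]
  calc h * (ψ x).toMul * h⁻¹ * w⁻¹ * (h⁻¹ * (ψ x⁻¹).toMul * h) * w * (h * (ψ x).toMul * h⁻¹)
      = h * (ψ x).toMul * (h⁻¹ * w⁻¹ * h⁻¹) * (ψ x⁻¹).toMul * (h * w * h) * (ψ x).toMul * h⁻¹ := by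
        group
    _ = _ := by rw [hhw, hhw']; group

theorem zpow_conj_of_conj (hψ : ∀ x, h * (ψ x).toMul * h⁻¹ = (ψ (z ^ 2 * x)).toMul) (n : ℤ)
    (x : F) : h ^ n * (ψ x).toMul * (h ^ n)⁻¹ = (ψ (↑(z ^ n) ^ 2 * x)).toMul := by
  induction n generalizing x with
  | zero => simp
  | succ n ih =>
    calc h ^ (n + 1 : ℤ) * (ψ x).toMul * (h ^ (n + 1 : ℤ))⁻¹
        = h ^ (n : ℤ) * (h * (ψ x).toMul * h⁻¹) * (h ^ (n : ℤ))⁻¹ := by group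
      _ = _ := by rw [hψ, ih, zpow_add_one, Units.val_mul, mul_pow, mul_assoc]
  | pred n ih =>
    have hinv : h⁻¹ * (ψ x).toMul * h = (ψ (↑z⁻¹ ^ 2 * x)).toMul := by
      have hx : (z : F) ^ 2 * (↑z⁻¹ ^ 2 * x) = x := by
        rw [← mul_assoc, ← mul_pow, Units.mul_inv, one_pow, one_mul]
      nth_rw 1 [← hx]
      rw [← hψ]
      group
    calc h ^ (-n - 1 : ℤ) * (ψ x).toMul * (h ^ (-n - 1 : ℤ))⁻¹
        = h ^ (-n : ℤ) * (h⁻¹ * (ψ x).toMul * h) * (h ^ (-n : ℤ))⁻¹ := by group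
      _ = _ := by rw [hinv, ih, zpow_sub_one, Units.val_mul, mul_pow, mul_assoc]

theorem weylWord_zpow_of_conj (hψ : ∀ x, h * (ψ x).toMul * h⁻¹ = (ψ (z ^ 2 * x)).toMul)
    (hw : w * h * w⁻¹ = h⁻¹) (h₁ : weylWord (fun x => (ψ x).toMul) w 1 = w)
    (hz : weylWord (fun x => (ψ x).toMul) w z = h * w) (n : ℤ) :
    weylWord (fun x => (ψ x).toMul) w ↑(z ^ n) = h ^ n * w := by
  have hw' (m : ℤ) : w * h ^ m * w⁻¹ = (h ^ m)⁻¹ := by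
    rw [← conj_zpow, hw, inv_zpow]
  have hwm (m : ℤ) : w * (h ^ m)⁻¹ = h ^ m * w := by
    rw [← mul_inv_eq_iff_eq_mul, ← zpow_neg, hw', zpow_neg, inv_inv]
  obtain ⟨m, rfl | rfl⟩ := n.even_or_odd'
  · have hx : (↑(z ^ (2 * m)) : F) = ↑(z ^ m) ^ 2 * 1 := by
      rw [mul_one, two_mul, zpow_add, Units.val_mul, sq]
    rw [hx, weylWord_sq_mul_of_conj (zpow_conj_of_conj hψ m) (hw' m), h₁, mul_assoc, hwm,
      ← mul_assoc, ← zpow_add, two_mul]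
  · have hx : (↑(z ^ (2 * m + 1)) : F) = ↑(z ^ m) ^ 2 * z := by
      rw [zpow_add_one, two_mul, zpow_add, Units.val_mul, Units.val_mul, sq]
    rw [hx, weylWord_sq_mul_of_conj (zpow_conj_of_conj hψ m) (hw' m), hz]
    calc h ^ m * (h * w) * (h ^ m)⁻¹ = h ^ m * h * (w * (h ^ m)⁻¹) := by group
      _ = _ := by rw [hwm]; group

/-- Only one torus generator and one Weyl word need to be controlled, since `Fˣ` is cyclic. -/
theorem exists_of_forall_mem_zpowers (hgen : ∀ t : Fˣ, t ∈ Subgroup.zpowers z)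
    (hψ : ∀ x, h * (ψ x).toMul * h⁻¹ = (ψ (z ^ 2 * x)).toMul)
    (hw : w * h * w⁻¹ = h⁻¹) (h₁ : weylWord (fun x => (ψ x).toMul) w 1 = w)
    (hz : weylWord (fun x => (ψ x).toMul) w z = h * w) :
    ∃ S : SteinbergSystem F G, (∀ x, S.root x = (ψ x).toMul) ∧ S.weyl = w ∧ S.torus z = h := by
  have hdvd : orderOf h ∣ orderOf z := by
    have hW := weylWord_zpow_of_conj hψ hw h₁ hz (orderOf z)
    rw [zpow_natCast, zpow_natCast, pow_orderOf_eq_one, Units.val_one, h₁] at hW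
    exact orderOf_dvd_of_pow_eq_one (mul_eq_right.1 hW.symm)
  have htorus : monoidHomOfForallMemZpowers hgen hdvd z = h := by simp
  refine ⟨{
    root x := (ψ x).toMul
    torus := monoidHomOfForallMemZpowers hgen hdvd
    weyl := w
    root_add x y := by rw [map_add, toMul_add]
    torus_conj_root t x := ?_
    weyl_conj_torus t := ?_
    weylWord_root t := ?_ }, fun _ => rfl, rfl, htorus⟩ <;> obtain ⟨n, rfl⟩ := hgen t
  · simpa only [map_zpow, htorus] using zpow_conj_of_conj hψ n x
  · simp only [map_zpow, htorus]
    rw [← conj_zpow, hw, inv_zpow]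
  · simpa only [map_zpow, htorus] using weylWord_zpow_of_conj hψ hw h₁ hz n

end Cyclic

section SpecialLinear

open Matrix Matrix.SpecialLinearGroup MatrixGroups

variable (F : Type*) [Field F]

/-- The standard Steinberg system of `SL(2, F)`. -/
def specialLinear : SteinbergSystem F SL(2, F) where
  root := unipotentSL
  torus := MonoidHom.mk' torusSL fun s t => by
    ext i j
    fin_cases i <;> fin_cases j <;> simp [mul_comm]
  weyl := weylSL
  root_add x y := by
    ext i j
    fin_cases i <;> fin_cases j <;> simp [add_comm]
  torus_conj_root t x := by
    rw [mul_inv_eq_iff_eq_mul]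
    ext i j
    fin_cases i <;> fin_cases j <;> simp [pow_two, mul_right_comm]
  weyl_conj_torus t := by
    rw [mul_inv_eq_iff_eq_mul, eq_inv_mul_iff_mul_eq]
    ext i j
    fin_cases i <;> fin_cases j <;> simp
  weylWord_root t := by
    rw [weylWord]
    ext i j
    fin_cases i <;> fin_cases j <;> simp

theorem closure_specialLinear_eq_top :
    Subgroup.closure (insert (specialLinear F).weyl (Set.range (specialLinear F).root)) = ⊤ := by
  set K := Subgroup.closure (insert (specialLinear F).weyl (Set.range (specialLinear F).root))
  have hweyl : (specialLinear F).weyl ∈ K := Subgroup.subset_closure (Set.mem_insert _ _)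
  have hroot (x : F) : (specialLinear F).root x ∈ K :=
    Subgroup.subset_closure (Set.mem_insert_of_mem _ ⟨x, rfl⟩)
  have hupper (x : F) : transvection zero_ne_one x = (specialLinear F).root x := by
    ext i j
    fin_cases i <;> fin_cases j <;> simp [specialLinear, transvection_coe]
  have hlower (x : F) : transvection one_ne_zero x = (specialLinear F).weyl *
      (specialLinear F).root (-x) * (specialLinear F).weyl⁻¹ := by
    rw [eq_mul_inv_iff_mul_eq]
    ext i j
    fin_cases i <;> fin_cases j <;> simp [specialLinear, transvection_coe, add_mul]
  refine (Subgroup.eq_top_iff' K).2 fun g =>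
    SL2.transvection_induction (· ∈ K) (fun i j hij x => ?_) (fun _ _ => K.mul_mem) g
  fin_cases i <;> fin_cases j
  · exact absurd rfl hij
  · exact hupper x ▸ hroot x
  · exact hlower x ▸ K.mul_mem (K.mul_mem hweyl (hroot _)) (K.inv_mem hweyl)
  · exact absurd rfl hij

variable {F} {G : Type*} [Group G] {S : SteinbergSystem F G}

theorem injective_of_map_eq_specialLinear
    (hS : Subgroup.closure (insert S.weyl (Set.range S.root)) = ⊤) {π : G →* SL(2, F)}
    (hroot : ∀ x, π (S.root x) = (specialLinear F).root x)
    (hweyl : π S.weyl = (specialLinear F).weyl) : Function.Injective π := by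
  have htorus (t : Fˣ) : π (S.torus t) = (specialLinear F).torus t := by
    have h := congrArg π (S.weylWord_root t)
    simp only [weylWord, map_mul, map_inv, hroot, hweyl] at h
    exact (mul_right_cancel (((specialLinear F).weylWord_root t).symm.trans h)).symm
  refine (injective_iff_map_eq_one π).2 fun g hg => ?_
  rcases mem_bruhatCells_of_closure_eq_top hS g with ⟨x, t, rfl⟩ | ⟨x, y, t, rfl⟩
  · rw [map_mul, hroot, htorus] at hg
    have h₀ := congr($hg 0 0)
    have h₁ := congr($hg 0 1)
    obtain rfl : t = 1 := by simpa [specialLinear] using h₀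
    obtain rfl : x = 0 := by simpa [specialLinear] using h₁
    simp [S.root_zero]
  · simp only [map_mul, hroot, hweyl, htorus] at hg
    have h := congr($hg 1 0)
    simp [specialLinear] at h

end SpecialLinear

end SteinbergSystem

/-! ## A bounded set of relators defining a Steinberg system -/

namespace SteinbergSystem

section Words

variable {F G : Type*} [Field F] [Group G] (S : SteinbergSystem F G)

theorem commute_root (x y : F) : Commute (S.root x) (S.root y) := by
  rw [Commute, SemiconjBy, ← S.root_add, add_comm, S.root_add]

theorem root_natCast (n : ℕ) : S.root n = S.root 1 ^ n := by
  induction n with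
  | zero => rw [Nat.cast_zero, S.root_zero, pow_zero]
  | succ n ih => rw [Nat.cast_succ, S.root_add, ih, pow_succ]

theorem torus_conj_root_one (t : Fˣ) : S.torus t * S.root 1 * (S.torus t)⁻¹ = S.root (t ^ 2) := by
  rw [S.torus_conj_root, mul_one]

variable {S} {B : ℕ} {e : Fˣ}

theorem natWord_eq_root (he : (e : F) ^ 2 = B) (n : ℕ) :
    natWord B (S.root 1) (S.torus e) n = S.root n := by
  rw [natWord_eq_pow (by rw [torus_conj_root_one, he, root_natCast]), root_natCast]

theorem polyWord_eq_root (he : (e : F) ^ 2 = B) (s : Fˣ) (l : List ℕ) :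
    polyWord B (S.root 1) (S.torus e) (S.torus s) l = S.root (Nat.ofDigits ((s : F) ^ 2) l) := by
  induction l with
  | nil => rw [polyWord, hornerWord, Nat.ofDigits, S.root_zero]
  | cons c l ih =>
    rw [polyWord] at ih
    rw [polyWord, hornerWord, ih, natWord_eq_root he, S.torus_conj_root, Nat.ofDigits, S.root_add]

theorem torus_mem_closure (t : Fˣ) :
    S.torus t ∈ Subgroup.closure (insert S.weyl (Set.range S.root)) := by
  have hweyl := Subgroup.subset_closure (Set.mem_insert S.weyl (Set.range S.root))
  have hroot (x : F) : S.root x ∈ Subgroup.closure (insert S.weyl (Set.range S.root)) :=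
    Subgroup.subset_closure (Set.mem_insert_of_mem _ ⟨x, rfl⟩)
  rw [← mul_inv_eq_iff_eq_mul.2 (S.weylWord_root t), weylWord]
  exact mul_mem (mul_mem (mul_mem (mul_mem (mul_mem (hroot _) (inv_mem hweyl)) (hroot _)) hweyl)
    (hroot _)) (inv_mem hweyl)

end Words

end SteinbergSystem

/-- Labels of the units whose torus elements are generators: `s` generates the field through its
square, `r` satisfies `r ^ 2 = 1 + s ^ 2`, the square of `e` is a small integer, and `z` generates
the multiplicative group. -/
inductive TorusLabel
  | s | r | e | z
  deriving DecidableEq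

instance : Fintype TorusLabel where
  elems := {.s, .r, .e, .z}
  complete i := by cases i <;> decide

/-- Labels of the generators in the presentation of a rank one group: the root element of `1`, the
Weyl element and the torus elements of the four units in `TorusLabel`. -/
inductive GeneratorLabel
  | root
  | weyl
  | torus (i : TorusLabel)
  deriving DecidableEq, Fintype

/-- Labels of the relators in the presentation of `SL(2, F)`. -/
inductive RelatorLabel
  | torusCommSR
  | torusCommZS
  | rootComm
  | conjR
  | conjE
  | conjZ
  | char
  | minpoly
  | weylConj
  | weylOne
  | weylTorus (i : TorusLabel)
  deriving DecidableEq, Fintype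

open Polynomial in
/-- The choices in a field `F` on which the presentation of `SL(2, F)` depends: units `unit i`, and
base `s ^ 2` digits for the elements of `F`, where `F` is the quotient of `ℤ[X]` by a natural number
`p` and the polynomial with coefficients `minpolyDigits`. -/
structure SteinbergData (F : Type*) [Field F] where
  p : ℕ
  B : ℕ
  unit : TorusLabel → Fˣ
  minpolyDigits : List ℕ
  digits : F → List ℕ
  unit_r_sq : (unit .r : F) ^ 2 = 1 + unit .s ^ 2
  unit_e_sq : (unit .e : F) ^ 2 = B
  mem_zpowers_unit_z (t : Fˣ) : t ∈ Subgroup.zpowers (unit .z)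
  ofDigits_digits (x : F) : Nat.ofDigits ((unit .s : F) ^ 2) (digits x) = x
  ker_aeval : RingHom.ker (aeval (R := ℤ) ((unit .s : F) ^ 2)) =
    Ideal.span {Nat.ofDigits X minpolyDigits, (p : ℤ[X])}

namespace SteinbergData

variable {F : Type*} [Field F] (D : SteinbergData F) {G H : Type*} [Group G] [Group H]

section Relators

open GeneratorLabel
open scoped commutatorElement

/-- The word in the generators `g` for the root element of `x`. -/
def rootWord (g : GeneratorLabel → G) (x : F) : G :=
  polyWord D.B (g root) (g (torus .e)) (g (torus .s)) (D.digits x)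

/-- The defining relators, evaluated at a family `g` of elements of any group. -/
def relator (g : GeneratorLabel → G) : RelatorLabel → G
  | .torusCommSR => ⁅g (torus .s), g (torus .r)⁆
  | .torusCommZS => ⁅g (torus .z), g (torus .s)⁆
  | .rootComm => ⁅g root, g (torus .s) * g root * (g (torus .s))⁻¹⁆
  | .conjR => g (torus .r) * g root * (g (torus .r))⁻¹ *
      (g root * (g (torus .s) * g root * (g (torus .s))⁻¹))⁻¹
  | .conjE => g (torus .e) * g root * (g (torus .e))⁻¹ * (g root ^ D.B)⁻¹
  | .conjZ => g (torus .z) * g root * (g (torus .z))⁻¹ * (D.rootWord g (D.unit .z ^ 2))⁻¹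
  | .char => natWord D.B (g root) (g (torus .e)) D.p
  | .minpoly => polyWord D.B (g root) (g (torus .e)) (g (torus .s)) D.minpolyDigits
  | .weylConj => g weyl * g (torus .z) * (g weyl)⁻¹ * g (torus .z)
  | .weylOne => weylWord (D.rootWord g) (g weyl) 1 * (g weyl)⁻¹
  | .weylTorus i => weylWord (D.rootWord g) (g weyl) (D.unit i) * (g (torus i) * g weyl)⁻¹

/-- The generators of a group with a Steinberg system. -/
def generator (S : SteinbergSystem F G) : GeneratorLabel → G
  | root => S.root 1
  | weyl => S.weyl
  | torus i => S.torus (D.unit i)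

end Relators

theorem map_rootWord (f : G →* H) (g : GeneratorLabel → G) (x : F) :
    f (D.rootWord g x) = D.rootWord (f ∘ g) x := by
  simp only [rootWord, map_polyWord, Function.comp_apply]

theorem map_relator (f : G →* H) (g : GeneratorLabel → G) (i : RelatorLabel) :
    f (D.relator g i) = D.relator (f ∘ g) i := by
  cases i <;> simp only [relator, weylWord, map_mul, map_inv, map_pow, map_commutatorElement,
    map_rootWord, map_natWord, map_polyWord, Function.comp_apply]

theorem natCast_p_eq_zero : (D.p : F) = 0 := by
  have h : (D.p : Polynomial ℤ) ∈ RingHom.ker (Polynomial.aeval (D.unit .s ^ 2 : F)) :=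
    D.ker_aeval ▸ Ideal.subset_span (by simp)
  simpa [RingHom.mem_ker] using h

theorem ofDigits_minpolyDigits : Nat.ofDigits ((D.unit .s : F) ^ 2) D.minpolyDigits = 0 := by
  have h : Nat.ofDigits Polynomial.X D.minpolyDigits ∈
      RingHom.ker (Polynomial.aeval (R := ℤ) (D.unit .s ^ 2 : F)) :=
    D.ker_aeval ▸ Ideal.subset_span (by simp)
  rw [RingHom.mem_ker] at h
  simpa using (map_natOfDigits (Polynomial.aeval _).toRingHom _ _).symm.trans h

theorem surjective_aeval :
    Function.Surjective (Polynomial.aeval (R := ℤ) ((D.unit .s : F) ^ 2)) := fun x => by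
  refine ⟨Nat.ofDigits Polynomial.X (D.digits x), ?_⟩
  conv_rhs => rw [← D.ofDigits_digits x]
  simpa using map_natOfDigits (Polynomial.aeval (R := ℤ) ((D.unit .s : F) ^ 2)).toRingHom
    Polynomial.X (D.digits x)

theorem rootWord_generator (S : SteinbergSystem F G) (x : F) :
    D.rootWord (D.generator S) x = S.root x := by
  simp only [rootWord, generator, SteinbergSystem.polyWord_eq_root D.unit_e_sq, D.ofDigits_digits]

theorem relator_generator (S : SteinbergSystem F G) (i : RelatorLabel) :
    D.relator (D.generator S) i = 1 := by
  have hroot : D.rootWord (D.generator S) = S.root := funext (D.rootWord_generator S)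
  cases i <;> simp only [relator, hroot] <;>
    simp only [generator, commutatorElement_eq_one_iff_commute, mul_inv_eq_one,
      S.torus_conj_root_one]
  case torusCommSR => exact (Commute.all _ _).map S.torus
  case torusCommZS => exact (Commute.all _ _).map S.torus
  case rootComm => exact S.commute_root _ _
  case conjR => rw [D.unit_r_sq, S.root_add]
  case conjE => rw [D.unit_e_sq, S.root_natCast]
  case char => rw [S.natWord_eq_root D.unit_e_sq, D.natCast_p_eq_zero, S.root_zero]
  case minpoly => rw [S.polyWord_eq_root D.unit_e_sq, D.ofDigits_minpolyDigits, S.root_zero]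
  case weylConj => rw [S.weyl_conj_torus, inv_mul_cancel]
  case weylOne => simpa using S.weylWord_root 1
  case weylTorus i => exact S.weylWord_root _

theorem exists_generator_eq {g : GeneratorLabel → G} (hg : ∀ i, D.relator g i = 1) :
    ∃ S : SteinbergSystem F G, D.generator S = g := by
  have hcomm := commute_conj_pow_conj_pow
    (commutatorElement_eq_one_iff_commute.1 (hg .torusCommSR)).symm
    (commutatorElement_eq_one_iff_commute.1 (hg .rootComm)) (mul_inv_eq_one.1 (hg .conjR))
  obtain ⟨ψ, h₁, hpoly, hconj⟩ := exists_addMonoidHom_of_conj D.surjective_aeval D.ker_aeval hcomm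
    (mul_inv_eq_one.1 (hg .conjE)) (hg .minpoly) (hg .char)
  have hroot : D.rootWord g = fun x => (ψ x).toMul := funext fun x => by
    rw [rootWord, hpoly, D.ofDigits_digits]
  have hz (x : F) : g (.torus .z) * (ψ x).toMul * (g (.torus .z))⁻¹ =
      (ψ (D.unit .z ^ 2 * x)).toMul := by
    refine hconj _ _ (commutatorElement_eq_one_iff_commute.1 (hg .torusCommZS)) ?_ x
    simpa only [hroot] using mul_inv_eq_one.1 (hg .conjZ)
  have hweyl (i : TorusLabel) : weylWord (fun x => (ψ x).toMul) (g .weyl) (D.unit i) =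
      g (.torus i) * g .weyl := hroot ▸ mul_inv_eq_one.1 (hg (.weylTorus i))
  obtain ⟨S, hSroot, hSweyl, -⟩ := SteinbergSystem.exists_of_forall_mem_zpowers
    D.mem_zpowers_unit_z hz (mul_eq_one_iff_eq_inv.1 (hg .weylConj))
    (hroot ▸ mul_inv_eq_one.1 (hg .weylOne)) (hweyl .z)
  refine ⟨S, funext fun i => ?_⟩
  cases i with
  | root => exact (hSroot 1).trans h₁
  | weyl => exact hSweyl
  | torus i =>
    refine mul_right_cancel (b := S.weyl) ((S.weylWord_root _).symm.trans ?_)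
    rw [funext hSroot, hSweyl, hweyl]

theorem closure_range_generator (S : SteinbergSystem F G) :
    Subgroup.closure (Set.range (D.generator S)) =
      Subgroup.closure (insert S.weyl (Set.range S.root)) := by
  refine le_antisymm ((Subgroup.closure_le _).2 ?_) ((Subgroup.closure_le _).2 ?_)
  · rintro _ ⟨i, rfl⟩
    cases i with
    | root => exact Subgroup.subset_closure (Set.mem_insert_of_mem _ ⟨1, rfl⟩)
    | weyl => exact Subgroup.subset_closure (Set.mem_insert _ _)
    | torus i => exact SteinbergSystem.torus_mem_closure _
  · rw [← FreeGroup.range_lift_eq_closure]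
    rintro _ (rfl | ⟨x, rfl⟩)
    · exact ⟨FreeGroup.of .weyl, FreeGroup.lift_apply_of⟩
    · refine ⟨D.rootWord FreeGroup.of x, ?_⟩
      rw [map_rootWord, freeGroup_lift_comp_of, D.rootWord_generator]

theorem lift_relator_of (g : GeneratorLabel → G) (i : RelatorLabel) :
    FreeGroup.lift g (D.relator FreeGroup.of i) = D.relator g i := by
  rw [map_relator, freeGroup_lift_comp_of]

theorem isPresentation_specialLinear :
    IsPresentation (D.generator (SteinbergSystem.specialLinear F))
      (D.relator FreeGroup.of) := by
  have hrel (i : RelatorLabel) : FreeGroup.lift (D.generator (SteinbergSystem.specialLinear F))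
      (D.relator FreeGroup.of i) = 1 := by rw [lift_relator_of, relator_generator]
  refine .of_toGroup_injective ?_ hrel ?_
  · rw [closure_range_generator, SteinbergSystem.closure_specialLinear_eq_top]
  set π := PresentedGroup.toGroup (Set.forall_mem_range.2 hrel)
  obtain ⟨S, hS⟩ := D.exists_generator_eq
    (g := PresentedGroup.of (rels := Set.range (D.relator FreeGroup.of))) fun i => by
      rw [← PresentedGroup.one_of_mem (rels := Set.range (D.relator FreeGroup.of)) ⟨i, rfl⟩]
      exact (D.map_relator (PresentedGroup.mk _) FreeGroup.of i).symm
  have hπ : π ∘ D.generator S = D.generator (SteinbergSystem.specialLinear F) := by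
    ext1 i
    rw [hS]
    exact PresentedGroup.toGroup.of _
  refine SteinbergSystem.injective_of_map_eq_specialLinear (S := S) ?_ (fun x => ?_)
    (congrFun hπ .weyl)
  · rw [← closure_range_generator, hS, PresentedGroup.closure_range_of]
  · rw [← D.rootWord_generator S, map_rootWord, hπ, rootWord_generator]

end SteinbergData

/-! ## Lengths of the relators -/

section WordNorm

variable {α : Type*} [DecidableEq α] {B : ℕ}

theorem norm_natWord_of_le (hB : 1 < B) (i j : α) (n : ℕ) :
    (natWord B (FreeGroup.of i) (FreeGroup.of j) n).norm ≤ (Nat.log B n + 1) * (B + 1) := by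
  have hpow : ∀ c ∈ B.digits n, (FreeGroup.of i ^ c).norm ≤ B - 1 := fun c hc => by
    rw [FreeGroup.norm_of_pow]
    exact Nat.le_sub_one_of_lt (Nat.digits_lt_base hB hc)
  have hlen : (B.digits n).length ≤ Nat.log B n + 1 := by
    obtain rfl | hn := eq_or_ne n 0
    · simp
    · exact (Nat.length_digits B n hB hn).le
  calc _ ≤ (B.digits n).length * (B - 1 + 2) := norm_hornerWord_le (FreeGroup.norm_of j).le hpow
    _ ≤ _ := Nat.mul_le_mul hlen (by omega)

theorem norm_polyWord_of_le (hB : 1 < B) (i j k : α) {l : List ℕ} {N : ℕ}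
    (hl : ∀ c ∈ l, c ≤ N) :
    (polyWord B (FreeGroup.of i) (FreeGroup.of j) (FreeGroup.of k) l).norm ≤
      l.length * ((Nat.log B N + 1) * (B + 1) + 2) :=
  norm_hornerWord_le (FreeGroup.norm_of k).le fun c hc => (norm_natWord_of_le hB i j c).trans <|
    Nat.mul_le_mul_right _ <| Nat.add_le_add_right (Nat.log_mono_right (hl c hc)) 1

end WordNorm

namespace SteinbergData

variable {F : Type*} [Field F] {D : SteinbergData F} {K : ℕ}

/-- The words on which all relators are built have length at most `K`. -/
structure IsShort (D : SteinbergData F) (K : ℕ) : Prop where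
  B_le : D.B ≤ 4
  norm_char_le : (D.relator FreeGroup.of .char).norm ≤ K
  norm_minpoly_le : (D.relator FreeGroup.of .minpoly).norm ≤ K
  norm_rootWord_le (x : F) : (D.rootWord FreeGroup.of x).norm ≤ K

theorem IsShort.norm_relator_le (h : D.IsShort K) (i : RelatorLabel) :
    (D.relator FreeGroup.of i).norm ≤ 3 * K + 10 := by
  have hof (i : GeneratorLabel) : (FreeGroup.of i).norm ≤ 1 := (FreeGroup.norm_of i).le
  have hinv {w : FreeGroup GeneratorLabel} {m : ℕ} (hw : w.norm ≤ m) : (w⁻¹).norm ≤ m :=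
    FreeGroup.norm_inv_eq.trans_le hw
  have hconj (i j : GeneratorLabel) :
      (FreeGroup.of i * FreeGroup.of j * (FreeGroup.of i)⁻¹).norm ≤ 3 :=
    freeGroup_norm_mul_le_add (freeGroup_norm_mul_le_add (hof i) (hof j)) (hinv (hof i))
  have hweyl (x : F) :
      (weylWord (D.rootWord FreeGroup.of) (.of .weyl) x).norm ≤ K + 1 + K + 1 + K :=
    freeGroup_norm_mul_le_add (freeGroup_norm_mul_le_add (freeGroup_norm_mul_le_add
      (freeGroup_norm_mul_le_add (h.norm_rootWord_le _) (hinv (hof _))) (h.norm_rootWord_le _))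
      (hof _)) (h.norm_rootWord_le _)
  have hB := h.B_le
  cases i with
  | torusCommSR | torusCommZS =>
    exact (freeGroup_norm_mul_le_add (hconj _ _) (hinv (hof _))).trans (by omega)
  | rootComm =>
    exact (freeGroup_norm_mul_le_add (freeGroup_norm_mul_le_add (freeGroup_norm_mul_le_add
      (hof _) (hconj _ _)) (hinv (hof _))) (hinv (hconj _ _))).trans (by omega)
  | conjR =>
    exact (freeGroup_norm_mul_le_add (hconj _ _)
      (hinv (freeGroup_norm_mul_le_add (hof _) (hconj _ _)))).trans (by omega)
  | conjE =>
    exact (freeGroup_norm_mul_le_add (hconj _ _)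
      (hinv (FreeGroup.norm_of_pow _ _).le)).trans (by omega)
  | conjZ =>
    exact (freeGroup_norm_mul_le_add (hconj _ _) (hinv (h.norm_rootWord_le _))).trans (by omega)
  | char => exact h.norm_char_le.trans (by omega)
  | minpoly => exact h.norm_minpoly_le.trans (by omega)
  | weylConj => exact (freeGroup_norm_mul_le_add (hconj _ _) (hof _)).trans (by omega)
  | weylOne => exact (freeGroup_norm_mul_le_add (hweyl _) (hinv (hof _))).trans (by omega)
  | weylTorus i =>
    exact (freeGroup_norm_mul_le_add (hweyl _)
      (hinv (freeGroup_norm_mul_le_add (hof _) (hof _)))).trans (by omega)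

end SteinbergData

/-! ## Finite fields as quotients of `ℤ[X]` -/

section Digits

open Polynomial

variable {p : ℕ}

/-- The list of the first `k` coefficients of `P`, represented in `{0, …, p - 1}`. -/
def valCoeffList (k : ℕ) (P : (ZMod p)[X]) : List ℕ :=
  (List.range k).map fun i => (P.coeff i).val

theorem length_valCoeffList (k : ℕ) (P : (ZMod p)[X]) : (valCoeffList k P).length = k := by
  simp [valCoeffList]

theorem le_of_mem_valCoeffList [NeZero p] {k c : ℕ} {P : (ZMod p)[X]} (hc : c ∈ valCoeffList k P) :
    c ≤ p := by
  obtain ⟨i, -, rfl⟩ := List.mem_map.1 hc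
  exact (ZMod.val_lt _).le

theorem natOfDigits_map_range {R : Type*} [CommSemiring R] (b : R) (f : ℕ → ℕ) (k : ℕ) :
    Nat.ofDigits b ((List.range k).map f) = ∑ i ∈ Finset.range k, f i * b ^ i := by
  induction k generalizing f with
  | zero => simp [Nat.ofDigits]
  | succ k ih =>
    rw [List.range_succ_eq_map, List.map_cons, List.map_map, Nat.ofDigits, ih,
      Finset.sum_range_succ', Finset.mul_sum, pow_zero, mul_one, add_comm]
    refine congrArg (· + _) (Finset.sum_congr rfl fun i _ => ?_)
    rw [Function.comp_apply, pow_succ', mul_left_comm]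

theorem ofDigits_valCoeffList [NeZero p] {k : ℕ} {P : (ZMod p)[X]} (hP : P.natDegree < k)
    {R : Type*} [CommRing R] [Algebra (ZMod p) R] (σ : R) :
    Nat.ofDigits σ (valCoeffList k P) = aeval σ P := by
  rw [valCoeffList, natOfDigits_map_range, aeval_eq_sum_range' hP]
  refine Finset.sum_congr rfl fun i _ => ?_
  rw [Algebra.smul_def, ← map_natCast (algebraMap (ZMod p) R), ZMod.natCast_zmod_val]

theorem ker_aeval_int_eq_span [Fact p.Prime] {R : Type*} [CommRing R] [Algebra (ZMod p) R]
    (σ : R) {f : ℤ[X]} (hf : f.map (Int.castRingHom (ZMod p)) = minpoly (ZMod p) σ) :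
    RingHom.ker (aeval (R := ℤ) σ) = Ideal.span {f, (p : ℤ[X])} := by
  have hsurj : Function.Surjective (mapRingHom (Int.castRingHom (ZMod p))) :=
    map_surjective _ (ZMod.ringHom_surjective _)
  have hker : RingHom.ker (mapRingHom (Int.castRingHom (ZMod p))) = Ideal.span {(p : ℤ[X])} := by
    rw [ker_mapRingHom, ZMod.ker_intCastRingHom, Ideal.map_span, Set.image_singleton]
    simp
  calc RingHom.ker (aeval (R := ℤ) σ)
      = (RingHom.ker (aeval (R := ZMod p) σ)).comap (mapRingHom (Int.castRingHom (ZMod p))) := by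
        ext g
        rw [Ideal.mem_comap, RingHom.mem_ker, RingHom.mem_ker, coe_mapRingHom,
          ← algebraMap_int_eq, aeval_map_algebraMap]
    _ = ((Ideal.span {f}).map (mapRingHom (Int.castRingHom (ZMod p)))).comap
          (mapRingHom (Int.castRingHom (ZMod p))) := by
        rw [minpoly.ker_aeval_eq_span_minpoly, Ideal.map_span, Set.image_singleton,
          coe_mapRingHom, hf]
    _ = Ideal.span {f, (p : ℤ[X])} := by
        rw [Ideal.comap_map_of_surjective _ hsurj, ← RingHom.ker_eq_comap_bot, hker,
          Ideal.span_insert]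

theorem norm_natWord_le_log {α : Type*} [DecidableEq α] {B : ℕ} [Fact p.Prime] (hB : 1 < B)
    (hB' : B ≤ 4) (i j : α) :
    (natWord B (FreeGroup.of i) (FreeGroup.of j) p).norm ≤ 10 * Nat.log 2 p := by
  have hlog : 1 ≤ Nat.log 2 p := Nat.log_pos one_lt_two (Fact.out : p.Prime).two_le
  calc _ ≤ (Nat.log B p + 1) * (B + 1) := norm_natWord_of_le hB i j p
    _ ≤ (Nat.log 2 p + 1) * 5 :=
      Nat.mul_le_mul (Nat.add_le_add_right (Nat.log_anti_left one_lt_two hB) 1) (by omega)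
    _ ≤ _ := by omega

theorem norm_polyWord_valCoeffList_le {α : Type*} [DecidableEq α] {B : ℕ} [Fact p.Prime]
    (hB : 1 < B) (hB' : B ≤ 4) (i j k : α) (n : ℕ) (P : (ZMod p)[X]) :
    (polyWord B (FreeGroup.of i) (FreeGroup.of j) (FreeGroup.of k) (valCoeffList n P)).norm ≤
      n * (12 * Nat.log 2 p) := by
  have hlog : 1 ≤ Nat.log 2 p := Nat.log_pos one_lt_two (Fact.out : p.Prime).two_le
  calc _ ≤ n * ((Nat.log B p + 1) * (B + 1) + 2) := by
        simpa only [length_valCoeffList] using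
          norm_polyWord_of_le hB i j k fun c hc => le_of_mem_valCoeffList hc
    _ ≤ n * ((Nat.log 2 p + 1) * 5 + 2) := Nat.mul_le_mul_left _ <| Nat.add_le_add_right
      (Nat.mul_le_mul (Nat.add_le_add_right (Nat.log_anti_left one_lt_two hB) 1) (by omega)) 2
    _ ≤ _ := Nat.mul_le_mul_left _ (by omega)

theorem natDegree_minpoly_mul_log_le [Fact p.Prime] {F : Type*} [Field F] [Finite F]
    [Algebra (ZMod p) F] (σ : F) :
    (minpoly (ZMod p) σ).natDegree * Nat.log 2 p ≤ Nat.log 2 (Nat.card F) := by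
  refine Nat.le_log_of_pow_le one_lt_two ?_
  calc 2 ^ ((minpoly (ZMod p) σ).natDegree * Nat.log 2 p)
      = (2 ^ Nat.log 2 p) ^ (minpoly (ZMod p) σ).natDegree := by rw [mul_comm, pow_mul]
    _ ≤ p ^ (minpoly (ZMod p) σ).natDegree :=
      Nat.pow_le_pow_left (Nat.pow_log_le_self 2 (NeZero.ne p)) _
    _ ≤ p ^ Module.finrank (ZMod p) F :=
      Nat.pow_le_pow_right (NeZero.pos p) (minpoly.natDegree_le σ)
    _ = Nat.card F := by
      rw [Module.natCard_eq_pow_finrank (K := ZMod p), Nat.card_zmod]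

end Digits

namespace SteinbergData

open Polynomial

variable {F : Type*} [Field F] [Finite F] {p : ℕ} [Fact p.Prime] [Algebra (ZMod p) F]

/-- The data obtained from a generator `unit .s ^ 2` of `F` over its prime field by reducing
polynomials modulo the minimal polynomial of `unit .s ^ 2`. -/
noncomputable def ofMinpoly (B : ℕ) (unit : TorusLabel → Fˣ)
    (hr : (unit .r : F) ^ 2 = 1 + unit .s ^ 2) (he : (unit .e : F) ^ 2 = B)
    (hz : ∀ t : Fˣ, t ∈ Subgroup.zpowers (unit .z))
    (hs : Function.Surjective (aeval (R := ZMod p) ((unit .s : F) ^ 2))) : SteinbergData F where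
  p := p
  B := B
  unit := unit
  minpolyDigits :=
    valCoeffList ((minpoly (ZMod p) ((unit .s : F) ^ 2)).natDegree + 1)
      (minpoly (ZMod p) ((unit .s : F) ^ 2))
  digits x := valCoeffList (minpoly (ZMod p) ((unit .s : F) ^ 2)).natDegree
    (Function.surjInv hs x %ₘ minpoly (ZMod p) ((unit .s : F) ^ 2))
  unit_r_sq := hr
  unit_e_sq := he
  mem_zpowers_unit_z := hz
  ofDigits_digits x := by
    have hint : IsIntegral (ZMod p) ((unit .s : F) ^ 2) := .of_finite _ _
    rw [ofDigits_valCoeffList (natDegree_modByMonic_lt _ (minpoly.monic hint)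
      (minpoly.ne_one _ _)), aeval_modByMonic_eq_self_of_root (minpoly.aeval _ _),
      Function.surjInv_eq hs]
  ker_aeval := by
    refine ker_aeval_int_eq_span _ ?_
    rw [← coe_mapRingHom, map_natOfDigits, coe_mapRingHom, map_X,
      ofDigits_valCoeffList (Nat.lt_succ_self _), aeval_X_left_apply]

variable {B : ℕ} {unit : TorusLabel → Fˣ} {hr : (unit .r : F) ^ 2 = 1 + unit .s ^ 2}
  {he : (unit .e : F) ^ 2 = B} {hz : ∀ t : Fˣ, t ∈ Subgroup.zpowers (unit .z)}
  {hs : Function.Surjective (aeval (R := ZMod p) ((unit .s : F) ^ 2))}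

theorem isShort_ofMinpoly (hB : 1 < B) (hB' : B ≤ 4) :
    (ofMinpoly B unit hr he hz hs).IsShort (24 * Nat.log 2 (Nat.card F)) := by
  set k := (minpoly (ZMod p) ((unit .s : F) ^ 2)).natDegree
  have hk : 1 ≤ k := minpoly.natDegree_pos (.of_finite _ _)
  have hcard : k * Nat.log 2 p ≤ Nat.log 2 (Nat.card F) := natDegree_minpoly_mul_log_le _
  have hle : Nat.log 2 p ≤ k * Nat.log 2 p := Nat.le_mul_of_pos_left _ hk
  exact {
    B_le := hB'
    norm_char_le := (norm_natWord_le_log (p := p) hB hB' _ _).trans (by linarith)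
    norm_minpoly_le :=
      (norm_polyWord_valCoeffList_le (p := p) hB hB' _ _ _ (k + 1) _).trans (by linarith)
    norm_rootWord_le x :=
      (norm_polyWord_valCoeffList_le (p := p) hB hB' _ _ _ k _).trans (by linarith) }

end SteinbergData

section FiniteField

open Polynomial

variable {F : Type*} [Field F]

theorem natCard_le_of_pow_eq_one {z : Fˣ} (hz : ∀ t : Fˣ, t ∈ Subgroup.zpowers z) {n : ℕ}
    (hn : 0 < n) (h : (z : F) ^ n = 1) : Nat.card F ≤ n + 1 := by
  have h₁ := orderOf_le_of_pow_eq_one hn (Units.ext (by simpa using h) : z ^ n = 1)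
  rw [orderOf_eq_card_of_forall_mem_zpowers hz, Nat.card_units] at h₁
  omega

/-- The hypothesis says that `y ↦ y ^ q` permutes the roots `z ^ 2` and `z ^ (-2)` of a quadratic
polynomial, so the order of `z` divides `2 * (q - 1)` or `2 * (q + 1)`. -/
theorem natCard_le_of_pow_add_inv_pow_eq {z : Fˣ} (hz : ∀ t : Fˣ, t ∈ Subgroup.zpowers z) {q : ℕ}
    (hq : 1 < q) (h : ((z : F) ^ 2) ^ q + (((z : F) ^ 2) ^ q)⁻¹ = (z : F) ^ 2 + ((z : F) ^ 2)⁻¹) :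
    Nat.card F ≤ 2 * (q + 1) + 1 := by
  have hx : (z : F) ^ 2 ≠ 0 := pow_ne_zero 2 z.ne_zero
  set y := ((z : F) ^ 2) ^ q with hy
  have hprod : (y - z ^ 2) * (y * z ^ 2 - 1) = 0 := by
    have hy0 : y ≠ 0 := pow_ne_zero _ hx
    field_simp at h
    linear_combination h
  rcases mul_eq_zero.1 hprod with h | h
  · have hpow : (z : F) ^ (2 * (q - 1)) = 1 := by
      refine mul_left_cancel₀ hx ?_
      rw [← pow_add, mul_one, ← sub_eq_zero.1 h, hy, ← pow_mul]
      congr 1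
      omega
    have := natCard_le_of_pow_eq_one hz (by omega) hpow
    omega
  · refine natCard_le_of_pow_eq_one hz (by omega) ?_
    rw [mul_add, mul_one, pow_add, pow_mul, ← hy, sub_eq_zero.1 h]

theorem intermediateField_eq_top_of_sq_add_inv_sq_mem [Finite F] (hF : 9 < Nat.card F) {z : Fˣ}
    (hz : ∀ t : Fˣ, t ∈ Subgroup.zpowers z) {k : Type*} [Field k] [Algebra k F]
    {K : IntermediateField k F} (hK : (z : F) ^ 2 + ((z : F) ^ 2)⁻¹ ∈ K) : K = ⊤ := by
  have := Fintype.ofFinite K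
  set q := Fintype.card K
  have hq1 : 1 < q := Fintype.one_lt_card
  have hfrob : ((z : F) ^ 2) ^ q + (((z : F) ^ 2) ^ q)⁻¹ = (z : F) ^ 2 + ((z : F) ^ 2)⁻¹ := by
    have h := (FiniteField.frobeniusAlgHom K F).commutes ⟨_, hK⟩
    rw [IntermediateField.algebraMap_apply] at h
    rwa [map_add, map_inv₀, FiniteField.frobeniusAlgHom_apply] at h
  have hle := natCard_le_of_pow_add_inv_pow_eq hz hq1 hfrob
  rw [← IntermediateField.finrank_eq_one_iff_eq_top]
  have hcard : Nat.card F = q ^ Module.finrank K F := by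
    rw [Module.natCard_eq_pow_finrank (K := K), Nat.card_eq_fintype_card]
  by_contra hne
  have hpos : 0 < Module.finrank K F := Module.finrank_pos
  have hsq : q ^ 2 ≤ Nat.card F := hcard ▸ Nat.pow_le_pow_right (by omega) (by omega)
  have hq3 : q ≤ 3 := by nlinarith
  omega

variable [Finite F]

theorem surjective_aeval_of_forall_mem {k : Type*} [Field k] [Algebra k F] {x : F}
    (h : ∀ K : IntermediateField k F, x ∈ K → K = ⊤) :
    Function.Surjective (aeval (R := k) x) := by
  have htop := h _ (IntermediateField.mem_adjoin_simple_self k x)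
  rw [← AlgHom.range_eq_top, ← Algebra.adjoin_singleton_eq_range_aeval,
    ← IntermediateField.adjoin_simple_toSubalgebra_of_isAlgebraic
      (Algebra.IsAlgebraic.isAlgebraic x), htop, IntermediateField.top_toSubalgebra]

theorem exists_isShort_of_two_eq_zero (h2 : (2 : F) = 0) (hF : 9 < Nat.card F) :
    ∃ D : SteinbergData F, D.IsShort (24 * Nat.log 2 (Nat.card F)) := by
  obtain ⟨p, _⟩ := CharP.exists F
  have : Fact p.Prime := ⟨CharP.char_is_prime F p⟩
  algebraize [ZMod.castHom (dvd_refl p) F]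
  obtain ⟨z, hz⟩ := IsCyclic.exists_generator (α := Fˣ)
  have hz1 : 1 + (z : F) ≠ 0 := fun h => by
    have hsq : (z : F) ^ 2 = 1 := by linear_combination (z - 1 : F) * h
    have := natCard_le_of_pow_eq_one hz two_pos hsq
    omega
  let unit : TorusLabel → Fˣ
    | .s => z
    | .r => Units.mk0 (1 + z) hz1
    | .e => 1
    | .z => z
  have hs : Function.Surjective (aeval (R := ZMod p) ((unit .s : F) ^ 2)) :=
    surjective_aeval_of_forall_mem fun K hK =>
      intermediateField_eq_top_of_sq_add_inv_sq_mem hF hz (add_mem hK (inv_mem hK))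
  refine ⟨.ofMinpoly 3 unit ?_ ?_ hz hs,
    SteinbergData.isShort_ofMinpoly (by norm_num) (by norm_num)⟩
  · simp only [unit, Units.val_mk0]
    linear_combination (z : F) * h2
  · simp only [unit, Units.val_one]
    push_cast
    linear_combination -h2

theorem exists_isShort_of_two_ne_zero (h2 : (2 : F) ≠ 0) (hF : 9 < Nat.card F) :
    ∃ D : SteinbergData F, D.IsShort (24 * Nat.log 2 (Nat.card F)) := by
  obtain ⟨p, _⟩ := CharP.exists F
  have : Fact p.Prime := ⟨CharP.char_is_prime F p⟩
  algebraize [ZMod.castHom (dvd_refl p) F]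
  obtain ⟨z, hz⟩ := IsCyclic.exists_generator (α := Fˣ)
  have hz4 : (z : F) ^ 4 ≠ 1 := fun h => by
    have := natCard_le_of_pow_eq_one hz four_pos h
    omega
  have hinv : (z : F) * (z : F)⁻¹ = 1 := mul_inv_cancel₀ z.ne_zero
  have hs0 : ((z : F) - (z : F)⁻¹) / 2 ≠ 0 := by
    refine div_ne_zero (fun h => hz4 ?_) h2
    linear_combination (z ^ 3 + z : F) * h + (z ^ 2 + 1 : F) * hinv
  have hr0 : ((z : F) + (z : F)⁻¹) / 2 ≠ 0 := by
    refine div_ne_zero (fun h => hz4 ?_) h2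
    linear_combination (z ^ 3 - z : F) * h - (z ^ 2 - 1 : F) * hinv
  let unit : TorusLabel → Fˣ
    | .s => Units.mk0 _ hs0
    | .r => Units.mk0 _ hr0
    | .e => Units.mk0 2 h2
    | .z => z
  have hs : Function.Surjective (aeval (R := ZMod p) ((unit .s : F) ^ 2)) := by
    refine surjective_aeval_of_forall_mem fun K hK =>
      intermediateField_eq_top_of_sq_add_inv_sq_mem hF hz ?_
    have heq : (z : F) ^ 2 + ((z : F) ^ 2)⁻¹ = 4 * (unit .s : F) ^ 2 + 2 := by
      simp only [unit, Units.val_mk0]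
      field_simp
      ring
    exact heq ▸ add_mem (mul_mem (ofNat_mem K 4) hK) (ofNat_mem K 2)
  refine ⟨.ofMinpoly 4 unit ?_ ?_ hz hs, SteinbergData.isShort_ofMinpoly (by norm_num) le_rfl⟩
  · simp only [unit, Units.val_mk0]
    field_simp
    ring
  · simp only [unit, Units.val_mk0]
    norm_num

theorem exists_isShort (hF : 9 < Nat.card F) :
    ∃ D : SteinbergData F, D.IsShort (24 * Nat.log 2 (Nat.card F)) :=
  (eq_or_ne (2 : F) 0).elim (exists_isShort_of_two_eq_zero · hF)
    (exists_isShort_of_two_ne_zero · hF)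

end FiniteField

/-! ## The projective groups -/

section Projective

open Matrix Matrix.SpecialLinearGroup MatrixGroups

variable {F : Type*} [Field F]

theorem coe_weyl_mul_weyl :
    (((SteinbergSystem.specialLinear F).weyl * (SteinbergSystem.specialLinear F).weyl : SL(2, F)) :
      Matrix (Fin 2) (Fin 2) F) = scalar (Fin 2) (-1) := by
  ext i j
  fin_cases i <;> fin_cases j <;> simp [SteinbergSystem.specialLinear]

theorem center_specialLinear_eq_normalClosure :
    Subgroup.center SL(2, F) = Subgroup.normalClosure
      {(SteinbergSystem.specialLinear F).weyl * (SteinbergSystem.specialLinear F).weyl} := by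
  refine le_antisymm (fun g hg => ?_) (Subgroup.normalClosure_le_normal ?_)
  · obtain ⟨r, hr, hg⟩ := mem_center_iff.1 hg
    rw [Fintype.card_fin, sq_eq_one_iff] at hr
    obtain rfl | rfl := hr
    · have h1 : g = 1 := Subtype.ext (by rw [← hg, map_one, coe_one])
      exact h1 ▸ one_mem _
    · exact Subgroup.subset_normalClosure (Subtype.ext (hg.symm.trans coe_weyl_mul_weyl.symm))
  · exact Set.singleton_subset_iff.2 (mem_center_iff.2 ⟨-1, by simp, coe_weyl_mul_weyl.symm⟩)

/-- The matrix `!![t, 0; 0, 1]`, whose class generates `PGL(2, F)` over `PSL(2, F)` when `t`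
generates `Fˣ`. -/
def dilationGL (t : Fˣ) : GL (Fin 2) F :=
  GeneralLinearGroup.mkOfDetNeZero !![↑t, 0; 0, 1] (by simp)

@[simp]
theorem coe_dilationGL (t : Fˣ) : (dilationGL t : Matrix (Fin 2) (Fin 2) F) = !![↑t, 0; 0, 1] :=
  rfl

@[simp]
theorem det_dilationGL (t : Fˣ) : GeneralLinearGroup.det (dilationGL t) = t :=
  Units.ext (by simp)

theorem dilationGL_mul_unipotentSL (t : Fˣ) (x : F) :
    dilationGL t * toGL (unipotentSL x) = toGL (unipotentSL (t * x)) * dilationGL t := by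
  ext i j
  fin_cases i <;> fin_cases j <;> simp

theorem dilationGL_mul_weylSL (t : Fˣ) :
    dilationGL t * toGL weylSL = toGL (torusSL t * weylSL) * dilationGL t := by
  ext i j
  fin_cases i <;> fin_cases j <;> simp

theorem dilationGL_mul_torusSL (t s : Fˣ) :
    dilationGL t * toGL (torusSL s) = toGL (torusSL s) * dilationGL t := by
  ext i j
  fin_cases i <;> fin_cases j <;> simp [mul_comm]

theorem dilationGL_sq (t : Fˣ) :
    toGL (torusSL t) * GeneralLinearGroup.scalar (Fin 2) t = dilationGL t ^ 2 := by
  ext i j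
  fin_cases i <;> fin_cases j <;> simp [pow_two]

theorem range_toPGL_sup_zpowers {z : Fˣ} (hz : ∀ t : Fˣ, t ∈ Subgroup.zpowers z) :
    (ProjectiveSpecialLinearGroup.toPGL (n := Fin 2) (R := F)).range ⊔
      Subgroup.zpowers (ProjGenLinGroup.mk (dilationGL z)) = ⊤ := by
  refine (Subgroup.eq_top_iff' _).2 fun g => ?_
  obtain ⟨A, rfl⟩ := ProjGenLinGroup.mk_surjective g
  obtain ⟨n, hn⟩ := Subgroup.mem_zpowers_iff.1 (hz (GeneralLinearGroup.det A))
  have hdet : A * (dilationGL z ^ n)⁻¹ ∈ Set.range (toGL : SL(2, F) → GL (Fin 2) F) := by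
    rw [range_toGL, Set.mem_preimage, map_mul, map_inv, map_zpow, det_dilationGL, hn,
      mul_inv_cancel, Set.mem_singleton_iff]
  obtain ⟨x, hx⟩ := hdet
  rw [eq_mul_inv_iff_mul_eq] at hx
  rw [← hx, map_mul, map_zpow]
  exact Subgroup.mul_mem_sup ⟨x, rfl⟩ (zpow_mem (Subgroup.mem_zpowers _) n)

theorem two_dvd_of_zpow_mem_range_toPGL [Finite F] (h2 : ringChar F ≠ 2) {z : Fˣ}
    (hz : ∀ t : Fˣ, t ∈ Subgroup.zpowers z) {k : ℤ} (hk : ProjGenLinGroup.mk (dilationGL z) ^ k ∈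
      (ProjectiveSpecialLinearGroup.toPGL (n := Fin 2) (R := F)).range) : (2 : ℤ) ∣ k := by
  obtain ⟨x, hx⟩ := hk
  obtain ⟨x, rfl⟩ := QuotientGroup.mk_surjective x
  rw [ProjectiveSpecialLinearGroup.toPGL_mk, ← map_zpow, ProjGenLinGroup.mk_eq_mk_iff] at hx
  obtain ⟨u, hu⟩ := hx
  have hsq : u ^ 2 = z ^ k := by
    simpa using congrArg GeneralLinearGroup.det hu
  obtain ⟨m, rfl⟩ := Subgroup.mem_zpowers_iff.1 (hz u)
  have hord : (2 : ℤ) ∣ orderOf z := by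
    have := Fintype.ofFinite F
    rw [orderOf_eq_card_of_forall_mem_zpowers hz, Nat.card_units, Nat.card_eq_fintype_card]
    have := FiniteField.odd_card_of_char_ne_two h2
    omega
  rw [← zpow_natCast, ← _root_.zpow_mul, zpow_eq_zpow_iff_modEq] at hsq
  have := hord.trans hsq.dvd
  omega

end Projective

namespace SteinbergData

open Matrix Matrix.SpecialLinearGroup MatrixGroups

section Presentation

variable {F : Type*} [Field F] (D : SteinbergData F)

theorem isPresentation_projectiveSpecialLinear :
    IsPresentation (QuotientGroup.mk' (Subgroup.center SL(2, F)) ∘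
        D.generator (SteinbergSystem.specialLinear F))
      (fun o : Option RelatorLabel => o.elim (.of .weyl * .of .weyl) (D.relator .of)) := by
  refine D.isPresentation_specialLinear.quotient (QuotientGroup.mk'_surjective _) _ ?_
  rw [QuotientGroup.ker_mk', center_specialLinear_eq_normalClosure, map_mul,
    FreeGroup.lift_apply_of]
  rfl

/-- Words for the conjugates of the generators by `dilationGL (D.unit .z)`. -/
def dilationConjWord : GeneratorLabel → FreeGroup GeneratorLabel
  | .root => D.rootWord .of (D.unit .z)
  | .weyl => .of (.torus .z) * .of .weyl
  | .torus i => .of (.torus i)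

theorem dilationGL_mul_generator (i : GeneratorLabel) :
    dilationGL (D.unit .z) * toGL (D.generator (SteinbergSystem.specialLinear F) i) =
      toGL (FreeGroup.lift (D.generator (SteinbergSystem.specialLinear F))
        (D.dilationConjWord i)) * dilationGL (D.unit .z) := by
  cases i with
  | root =>
    rw [dilationConjWord, map_rootWord, freeGroup_lift_comp_of, rootWord_generator]
    exact mul_one (D.unit .z : F) ▸ dilationGL_mul_unipotentSL (D.unit .z) 1
  | weyl =>
    rw [dilationConjWord, map_mul, FreeGroup.lift_apply_of, FreeGroup.lift_apply_of]
    exact dilationGL_mul_weylSL _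
  | torus i =>
    rw [dilationConjWord, FreeGroup.lift_apply_of]
    exact dilationGL_mul_torusSL _ _

theorem isPresentation_projGenLinGroup [Finite F] (h2 : ringChar F ≠ 2) :
    IsPresentation
      (fun o : Option GeneratorLabel => o.elim (ProjGenLinGroup.mk (dilationGL (D.unit .z)))
        (ProjectiveSpecialLinearGroup.toPGL ∘ QuotientGroup.mk' (Subgroup.center SL(2, F)) ∘
          D.generator (SteinbergSystem.specialLinear F)))
      (cyclicExtensionRel
        (fun o : Option RelatorLabel => o.elim (.of .weyl * .of .weyl) (D.relator .of))
        2 (.of (.torus .z)) D.dilationConjWord) := by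
  refine D.isPresentation_projectiveSpecialLinear.cyclicExtension
    ProjectiveSpecialLinearGroup.toPGL_injective two_ne_zero ?_ (fun i => ?_)
    (range_toPGL_sup_zpowers D.mem_zpowers_unit_z)
    fun k => two_dvd_of_zpow_mem_range_toPGL h2 D.mem_zpowers_unit_z
  · rw [FreeGroup.lift_apply_of, ← map_pow]
    exact (ProjGenLinGroup.mk_eq_mk_iff.2 ⟨_, dilationGL_sq _⟩).symm
  · rw [freeGroup_lift_comp, MonoidHom.comp_apply, mul_inv_eq_iff_eq_mul]
    exact congrArg ProjGenLinGroup.mk (D.dilationGL_mul_generator i)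

end Presentation

section HasBoundedPresentation

variable {F : Type} [Field F] {D : SteinbergData F} {K : ℕ}

theorem IsShort.norm_projectiveRelator_le (h : D.IsShort K) (o : Option RelatorLabel) :
    (o.elim (.of .weyl * .of .weyl) (D.relator .of) : FreeGroup GeneratorLabel).norm ≤
      3 * K + 10 := by
  cases o with
  | none =>
    exact (freeGroup_norm_mul_le_add (FreeGroup.norm_of _).le (FreeGroup.norm_of _).le).trans
      (by omega)
  | some i => exact h.norm_relator_le i

theorem IsShort.norm_dilationConjWord_le (h : D.IsShort K) (i : GeneratorLabel) :
    (D.dilationConjWord i).norm ≤ K + 2 := by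
  cases i with
  | root => exact (h.norm_rootWord_le _).trans (by omega)
  | weyl =>
    exact (freeGroup_norm_mul_le_add (FreeGroup.norm_of _).le (FreeGroup.norm_of _).le).trans
      (by omega)
  | torus i => exact (FreeGroup.norm_of _).trans_le (by omega)

theorem IsShort.hasBoundedPresentation_SL (h : D.IsShort K) :
    HasBoundedPresentation SL(2, F) 6 14 (6 + 14 * (3 * K + 10) : ℕ) :=
  D.isPresentation_specialLinear.hasBoundedPresentation h.norm_relator_le

theorem IsShort.hasBoundedPresentation_PSL (h : D.IsShort K) :
    HasBoundedPresentation PSL(2, F) 6 15 (6 + 15 * (3 * K + 10) : ℕ) :=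
  D.isPresentation_projectiveSpecialLinear.hasBoundedPresentation h.norm_projectiveRelator_le

theorem IsShort.hasBoundedPresentation_PGL [Finite F] (h : D.IsShort K) :
    HasBoundedPresentation PGL(2, F) 7 22 (7 + 22 * (3 * K + 10) : ℕ) := by
  by_cases h2 : ringChar F = 2
  · have hsurj : Function.Surjective
        (ProjectiveSpecialLinearGroup.toPGL (n := Fin 2) (R := F)) := by
      refine ProjectiveSpecialLinearGroup.toPGL_surj_of_roots fun r => ?_
      obtain ⟨c, hc⟩ := FiniteField.isSquare_of_char_two h2 (r : F)
      have hc0 : c ≠ 0 := fun h0 => r.ne_zero (by rw [hc, h0, mul_zero])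
      exact ⟨Units.mk0 c hc0, Units.ext (by simp [hc, sq])⟩
    refine (h.hasBoundedPresentation_PSL.congr
      (.ofBijective _ ⟨ProjectiveSpecialLinearGroup.toPGL_injective, hsurj⟩)).mono ?_ ?_ ?_
    · norm_num
    · norm_num
    · gcongr <;> norm_num
  · refine (D.isPresentation_projGenLinGroup h2).hasBoundedPresentation
      (norm_cyclicExtensionRel_le h.norm_projectiveRelator_le ?_ fun i => ?_)
    · rw [FreeGroup.norm_of]
      omega
    · have := h.norm_dilationConjWord_le i
      omega

end HasBoundedPresentation

end SteinbergData

section SmallOrder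

open Matrix Matrix.SpecialLinearGroup

variable (n : ℕ) (R : Type*) [CommRing R] [Finite R]

theorem natCard_GL_le : Nat.card (GL (Fin n) R) ≤ Nat.card R ^ n ^ 2 := by
  calc Nat.card (GL (Fin n) R) ≤ Nat.card (Matrix (Fin n) (Fin n) R) :=
        Nat.card_le_card_of_injective _ Units.val_injective
    _ = Nat.card R ^ n ^ 2 := by
        simp only [Matrix, Nat.card_fun, Nat.card_fin, ← pow_mul, ← sq]

theorem natCard_SL_le : Nat.card (SpecialLinearGroup (Fin n) R) ≤ Nat.card R ^ n ^ 2 :=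
  (Nat.card_le_card_of_injective _ toGL_injective).trans (natCard_GL_le n R)

end SmallOrder

/-- There is a constant `C` such that for every finite field `F` of order `q`, each of
`SL(2, F)`, `PSL(2, F)` and `PGL(2, F)` has a presentation with at most `C` generators
and at most `C` relators, of length at most `C·(1 + log₂ q)`. -/
theorem rank_one_short_bounded_presentations :
    ∃ C : ℕ, ∀ (F : Type) [Field F] [Fintype F],
      HasBoundedPresentation (Matrix.SpecialLinearGroup (Fin 2) F) C C
        (C * (1 + Real.logb 2 (Fintype.card F))) ∧
      HasBoundedPresentation
        (Matrix.SpecialLinearGroup (Fin 2) F ⧸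
          Subgroup.center (Matrix.SpecialLinearGroup (Fin 2) F)) C C
        (C * (1 + Real.logb 2 (Fintype.card F))) ∧
      HasBoundedPresentation
        (Matrix.GeneralLinearGroup (Fin 2) F ⧸
          Subgroup.center (Matrix.GeneralLinearGroup (Fin 2) F)) C C
        (C * (1 + Real.logb 2 (Fintype.card F))) := by
  -- The size of the constant is due to the multiplication tables of groups of order up to `9 ^ 4`.
  refine ⟨10 ^ 9, fun F _ _ => ?_⟩
  have hlog : (Nat.log 2 (Nat.card F) : ℝ) ≤ Real.logb 2 (Fintype.card F) := by
    rw [Nat.card_eq_fintype_card]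
    exact_mod_cast Real.natLog_le_logb (Fintype.card F) 2
  have : (0 : ℝ) ≤ Nat.log 2 (Nat.card F) := Nat.cast_nonneg _
  rcases lt_or_ge 9 (Nat.card F) with hF | hF
  · obtain ⟨D, hD⟩ := exists_isShort hF
    exact ⟨hD.hasBoundedPresentation_SL.mono (by norm_num) (by norm_num) (by push_cast; linarith),
      hD.hasBoundedPresentation_PSL.mono (by norm_num) (by norm_num) (by push_cast; linarith),
      hD.hasBoundedPresentation_PGL.mono (by norm_num) (by norm_num) (by push_cast; linarith)⟩
  · have hsmall (G : Type) [Group G] [Finite G] (hG : Nat.card G ≤ Nat.card F ^ 2 ^ 2) :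
        HasBoundedPresentation G (10 ^ 9) (10 ^ 9)
          ((10 ^ 9 : ℕ) * (1 + Real.logb 2 (Fintype.card F))) :=
      (HasBoundedPresentation.of_natCard_le G (hG.trans (Nat.pow_le_pow_left hF _))).mono
        (by norm_num) (by norm_num) (by push_cast; linarith)
    exact ⟨hsmall _ (natCard_SL_le 2 F),
      hsmall _ ((Nat.card_le_card_of_surjective _ QuotientGroup.mk_surjective).trans
        (natCard_SL_le 2 F)),
      hsmall _ ((Nat.card_le_card_of_surjective _ QuotientGroup.mk_surjective).trans
        (natCard_GL_le 2 F))⟩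
end
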